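/- arXiv:2204.11401 — 10 statements merged into one kernel-verified Lean document; each statement's English description precedes it below -/
import Mathlib

section
/- The derivative R_b' has exactly two real zeros c₁ and c₂; the critical point c₁ lies in E_1^0 = (1/(b+1), b/(b+1)) and c₂ lies in E_1^1 = ((b+2)/(b+1), (2b+1)/(b+1)); moreover the critical values lie outside [0,2]: R_b(c₁) > 2 and R_b(c₂) < 0. -/
open Set

/-- The spectral decimation function `R_b`. -/
noncomputable def Rb (b : ℕ) : ℝ → ℝ :=
  fun z => (z / (b : ℝ)) * (((b : ℝ) + 1) * z - (2 * (b : ℝ) + 1)) *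
    (((b : ℝ) + 1) * z - ((b : ℝ) + 2))

/-!
In the variable `w = (b + 1) (z - 1)`, the cubic `b (b + 1) R_b` becomes
`(w + b + 1) (w - b) (w - 1)`, whose roots sum to zero. Hence the graph of `R_b` is symmetric
about the point `(1, 1)`, this symmetry exchanges the two gaps, and
`R_b' = (3 w² - (b² + b + 1)) / b`. The zeros of the derivative are therefore
`w = ± √((b² + b + 1) / 3)`, and this square root lies in `(1, b)`. On the upper gap `1 < w < b`, so
`R_b < 0` by the signs of its factors; by symmetry `R_b > 2` on the lower gap.
-/

/-- The spectral decimation function `R_β` with a real parameter `β` in place of the integer `b`. -/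
noncomputable def spectralDecimation (β z : ℝ) : ℝ :=
  z / β * ((β + 1) * z - (2 * β + 1)) * ((β + 1) * z - (β + 2))

/-- The level-one gap `E₁⁰` for a real parameter `β`. -/
def lowerGap (β : ℝ) : Set ℝ := Ioo (1 / (β + 1)) (β / (β + 1))

/-- The level-one gap `E₁¹` for a real parameter `β`. -/
def upperGap (β : ℝ) : Set ℝ := Ioo ((β + 2) / (β + 1)) ((2 * β + 1) / (β + 1))

/-- The common distance of the two critical points of `spectralDecimation β` from its centre of
symmetry `1`. -/
noncomputable def criticalRadius (β : ℝ) : ℝ := √((β ^ 2 + β + 1) / 3) / (β + 1)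

section

variable {β z : ℝ}

theorem two_sub_mem_upperGap_iff (hβ : β + 1 ≠ 0) : 2 - z ∈ upperGap β ↔ z ∈ lowerGap β := by
  have left_endpoint : 2 - (2 * β + 1) / (β + 1) = 1 / (β + 1) := by field_simp; ring
  have right_endpoint : 2 - (β + 2) / (β + 1) = β / (β + 1) := by field_simp; ring
  rw [upperGap, lowerGap, sub_mem_Ioo_iff_right, left_endpoint, right_endpoint]

theorem spectralDecimation_two_sub (hβ : β ≠ 0) :
    spectralDecimation β (2 - z) = 2 - spectralDecimation β z := by
  unfold spectralDecimation
  field_simp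
  ring

theorem spectralDecimation_neg_of_mem_upperGap (hβ : 0 < β) (hz : z ∈ upperGap β) :
    spectralDecimation β z < 0 := by
  have hβ₁ : 0 < β + 1 := by positivity
  have hz_pos : 0 < z := lt_trans (by positivity) hz.1
  have hz_left : β + 2 < (β + 1) * z := (div_lt_iff₀' hβ₁).mp hz.1
  have hz_right : (β + 1) * z < 2 * β + 1 := (lt_div_iff₀' hβ₁).mp hz.2
  exact mul_neg_of_neg_of_pos
    (mul_neg_of_pos_of_neg (div_pos hz_pos hβ) (sub_neg.mpr hz_right)) (sub_pos.mpr hz_left)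

theorem two_lt_spectralDecimation_of_mem_lowerGap (hβ : 0 < β) (hz : z ∈ lowerGap β) :
    2 < spectralDecimation β z := by
  have hneg : spectralDecimation β (2 - z) < 0 :=
    spectralDecimation_neg_of_mem_upperGap hβ ((two_sub_mem_upperGap_iff (by positivity)).mpr hz)
  rwa [spectralDecimation_two_sub hβ.ne', sub_neg] at hneg

theorem hasDerivAt_spectralDecimation (hβ : β ≠ 0) (z : ℝ) :
    HasDerivAt (spectralDecimation β)
      ((3 * ((β + 1) * (z - 1)) ^ 2 - (β ^ 2 + β + 1)) / β) z := by
  have hlinear (k : ℝ) : HasDerivAt (fun x : ℝ ↦ (β + 1) * x - k) ((β + 1) * 1) z :=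
    ((hasDerivAt_id' z).const_mul (β + 1)).sub_const k
  refine ((((hasDerivAt_id' z).div_const β).mul (hlinear (2 * β + 1))).mul
    (hlinear (β + 2))).congr_deriv ?_
  simp only [Pi.mul_apply]
  field_simp
  ring

theorem criticalRadius_sq (β : ℝ) :
    criticalRadius β ^ 2 = (β ^ 2 + β + 1) / 3 / (β + 1) ^ 2 := by
  have hnonneg : 0 ≤ (β ^ 2 + β + 1) / 3 := by nlinarith [sq_nonneg (2 * β + 1)]
  rw [criticalRadius, div_pow, Real.sq_sqrt hnonneg]

theorem one_add_criticalRadius_mem_upperGap (hβ : 1 < β) : 1 + criticalRadius β ∈ upperGap β := by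
  have hβ₁ : 0 < β + 1 := by linarith
  have one_lt_sqrt : 1 < √((β ^ 2 + β + 1) / 3) := Real.lt_sqrt_of_sq_lt (by nlinarith)
  have sqrt_lt : √((β ^ 2 + β + 1) / 3) < β := (Real.sqrt_lt' (by linarith)).mpr (by nlinarith)
  rw [criticalRadius, one_add_div hβ₁.ne']
  exact ⟨div_lt_div_of_pos_right (by linarith) hβ₁, div_lt_div_of_pos_right (by linarith) hβ₁⟩

theorem one_sub_criticalRadius_mem_lowerGap (hβ : 1 < β) : 1 - criticalRadius β ∈ lowerGap β := by
  have reflected : 2 - (1 - criticalRadius β) = 1 + criticalRadius β := by ring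
  rw [← two_sub_mem_upperGap_iff (by linarith), reflected]
  exact one_add_criticalRadius_mem_upperGap hβ

theorem deriv_spectralDecimation_eq_zero_iff (hβ : 0 < β) :
    deriv (spectralDecimation β) z = 0 ↔
      z = 1 - criticalRadius β ∨ z = 1 + criticalRadius β := by
  calc deriv (spectralDecimation β) z = 0
    _ ↔ 3 * ((β + 1) * (z - 1)) ^ 2 = β ^ 2 + β + 1 := by
      rw [(hasDerivAt_spectralDecimation hβ.ne' z).deriv, div_eq_zero_iff, or_iff_left hβ.ne',
        sub_eq_zero]
    _ ↔ (z - 1) ^ 2 = criticalRadius β ^ 2 := by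
      rw [criticalRadius_sq, div_div, eq_div_iff (by positivity)]
      ring_nf
    _ ↔ z = 1 - criticalRadius β ∨ z = 1 + criticalRadius β := by
      rw [sq_eq_sq_iff_eq_or_eq_neg, or_comm, sub_eq_iff_eq_add', sub_eq_iff_eq_add',
        ← sub_eq_add_neg]

end

theorem critical_points_of_Rb_general {β : ℝ} (hβ : 1 < β) :
    ∃ c₁ c₂ : ℝ, c₁ ≠ c₂ ∧
      {x : ℝ | deriv (spectralDecimation β) x = 0} = {c₁, c₂} ∧
      c₁ ∈ lowerGap β ∧ c₂ ∈ upperGap β ∧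
      2 < spectralDecimation β c₁ ∧ spectralDecimation β c₂ < 0 := by
  have hβ₀ : 0 < β := zero_lt_one.trans hβ
  have hlower := one_sub_criticalRadius_mem_lowerGap hβ
  have hupper := one_add_criticalRadius_mem_upperGap hβ
  have hlower_value := two_lt_spectralDecimation_of_mem_lowerGap hβ₀ hlower
  have hupper_value := spectralDecimation_neg_of_mem_upperGap hβ₀ hupper
  refine ⟨_, _, fun heq ↦ ?_, ?_, hlower, hupper, hlower_value, hupper_value⟩
  · rw [heq] at hlower_value
    linarith
  · ext z
    exact deriv_spectralDecimation_eq_zero_iff hβ₀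

/-- The derivative of `R_b` has exactly two real zeros `c₁`, `c₂`; the critical point
`c₁` lies in `E₁⁰ = (1/(b+1), b/(b+1))` and `c₂` lies in
`E₁¹ = ((b+2)/(b+1), (2b+1)/(b+1))`; moreover the critical values lie outside `[0,2]`:
`R_b(c₁) > 2` and `R_b(c₂) < 0`. -/
theorem critical_points_of_Rb (b : ℕ) (hb : 2 ≤ b) :
    ∃ c₁ c₂ : ℝ, c₁ ≠ c₂ ∧
      {x : ℝ | deriv (Rb b) x = 0} = {c₁, c₂} ∧
      c₁ ∈ Ioo (1 / ((b : ℝ) + 1)) ((b : ℝ) / ((b : ℝ) + 1)) ∧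
      c₂ ∈ Ioo (((b : ℝ) + 2) / ((b : ℝ) + 1)) ((2 * (b : ℝ) + 1) / ((b : ℝ) + 1)) ∧
      2 < Rb b c₁ ∧ Rb b c₂ < 0 := by
  exact critical_points_of_Rb_general (β := b) (by exact_mod_cast hb)
end

section
/- For every y ∈ [0,2], the set {x ∈ ℝ : R_b(x) = y} has exactly three elements, and all three elements lie in [0,2]. -/
open Set

/-! A polynomial of degree `n` takes each value at most `n` times, so if `n` disjoint sets each
contain a preimage of `y`, there are no further preimages. For `β > 1` the cubic `R_β` maps each of
the three disjoint intervals `[0, 1/(β+1)]`, `[β/(β+1), (β+2)/(β+1)]`, `[(2β+1)/(β+1), 2]` onto a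
set containing `[0, 2]`, since its values at the successive endpoints are `0, 2, 2, 0, 0, 2`. -/

open Polynomial

section Fiber

variable {R : Type*} [CommRing R] [IsDomain R] {p : R[X]} {y : R}

lemma encard_setOf_eval_eq_le_natDegree (hp : 0 < p.degree) :
    {x | p.eval x = y}.encard ≤ p.natDegree := by
  classical
  have fiber_eq_roots : {x | p.eval x = y} = (p - C y).roots.toFinset := by
    ext x
    simp only [mem_ofPred_eq, Finset.mem_coe, Multiset.mem_toFinset, mem_roots_sub_C hp]
  rw [fiber_eq_roots, encard_coe_eq_coe_finsetCard]
  exact_mod_cast (Multiset.toFinset_card_le _).trans (card_roots_sub_C' hp)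

theorem ncard_setOf_eval_eq_and_subset_iUnion {ι : Type*} {s : ι → Set R}
    (hp : 0 < p.degree) (hcard : p.natDegree ≤ Nat.card ι)
    (hs : Pairwise (Function.onFun Disjoint s)) (hy : ∀ i, y ∈ (p.eval ·) '' s i) :
    {x | p.eval x = y}.ncard = Nat.card ι ∧ {x | p.eval x = y} ⊆ ⋃ i, s i := by
  choose x hxs hxy using hy
  have x_injective : Function.Injective x := fun i j hij ↦ by
    by_contra hne
    exact disjoint_left.1 (hs hne) (hxs i) (hij ▸ hxs j)
  have ncard_range : (range x).ncard = Nat.card ι := Nat.card_range_of_injective x_injective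
  have range_eq : range x = {x | p.eval x = y} := by
    have fiber_le := encard_setOf_eval_eq_le_natDegree (y := y) hp
    have fiber_finite := finite_of_encard_le_coe fiber_le
    refine eq_of_subset_of_ncard_le (range_subset_iff.2 hxy) ?_ fiber_finite
    rw [← fiber_finite.cast_ncard_eq, Nat.cast_le] at fiber_le
    exact ncard_range ▸ fiber_le.trans hcard
  rw [← range_eq]
  exact ⟨ncard_range, range_subset_iff.2 fun i ↦ mem_iUnion_of_mem i (hxs i)⟩

end Fiber

/-- The spectral decimation function `R_β` as a polynomial, with the branching parameter allowed to
be real; its values at `β = b` are those of `Rb b`. -/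
noncomputable def decimationPoly (β : ℝ) : ℝ[X] :=
  C β⁻¹ * X * (C (β + 1) * X - C (2 * β + 1)) * (C (β + 1) * X - C (β + 2))

/-- For `β > 1`, the three disjoint intervals, in increasing order, each of which `R_β` maps over
`[0, 2]`; the inner endpoints are solutions of `R_β = 0` or `R_β = 2`. -/
def decimationLap (β : ℝ) : Fin 3 → Set ℝ :=
  ![Icc 0 (1 / (β + 1)), Icc (β / (β + 1)) ((β + 2) / (β + 1)),
    Icc ((2 * β + 1) / (β + 1)) 2]

section Decimation

variable {β : ℝ}

lemma eval_decimationPoly (β x : ℝ) : (decimationPoly β).eval x =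
    x / β * ((β + 1) * x - (2 * β + 1)) * ((β + 1) * x - (β + 2)) := by
  simp only [decimationPoly, eval_mul, eval_sub, eval_C, eval_X]
  ring

lemma natDegree_decimationPoly (hβ : 0 < β) : (decimationPoly β).natDegree = 3 := by
  have hβ' : β + 1 ≠ 0 := by positivity
  unfold decimationPoly
  compute_degree!
  exact ⟨hβ.ne', hβ'⟩

lemma pairwise_disjoint_decimationLap (hβ : 1 < β) :
    Pairwise (Function.onFun Disjoint (decimationLap β)) := by
  have first_lt_second : 1 / (β + 1) < β / (β + 1) := by gcongr
  have second_le : β / (β + 1) ≤ (β + 2) / (β + 1) := by gcongr; linarith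
  have second_lt_third : (β + 2) / (β + 1) < (2 * β + 1) / (β + 1) := by gcongr 1; linarith
  have disjoint_Icc {a b c d : ℝ} (hbc : b < c) : Disjoint (Icc a b) (Icc c d) :=
    (Iic_disjoint_Ici.2 hbc.not_ge).mono Icc_subset_Iic_self Icc_subset_Ici_self
  refine (pairwise_disjoint_on _).2 fun i j hij ↦ ?_
  fin_cases i <;> fin_cases j <;> try exact absurd hij (by decide)
  · exact disjoint_Icc first_lt_second
  · exact disjoint_Icc (first_lt_second.trans (second_le.trans_lt second_lt_third))
  · exact disjoint_Icc second_lt_third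

lemma decimationLap_subset (hβ : 0 ≤ β) (i : Fin 3) : decimationLap β i ⊆ Icc 0 2 := by
  have hβ' : 0 < β + 1 := by positivity
  fin_cases i
  · exact Icc_subset_Icc le_rfl (by rw [div_le_iff₀ hβ']; linarith)
  · exact Icc_subset_Icc (by positivity) (by rw [div_le_iff₀ hβ']; linarith)
  · exact Icc_subset_Icc (by positivity) le_rfl

lemma Icc_subset_image_decimationLap (hβ : 0 < β) (i : Fin 3) :
    Icc 0 2 ⊆ ((decimationPoly β).eval ·) '' decimationLap β i := by
  have hβ' : 0 < β + 1 := by positivity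
  have hcont := (decimationPoly β).continuous
  have eval_zero : (decimationPoly β).eval 0 = 0 := by
    rw [eval_decimationPoly]; ring
  have eval_first_right : (decimationPoly β).eval (1 / (β + 1)) = 2 := by
    rw [eval_decimationPoly]; field_simp; ring
  have eval_second_left : (decimationPoly β).eval (β / (β + 1)) = 2 := by
    rw [eval_decimationPoly]; field_simp; ring
  have eval_second_right : (decimationPoly β).eval ((β + 2) / (β + 1)) = 0 := by
    rw [eval_decimationPoly]; field_simp; ring
  have eval_third_left : (decimationPoly β).eval ((2 * β + 1) / (β + 1)) = 0 := by
    rw [eval_decimationPoly]; field_simp; ring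
  have eval_two : (decimationPoly β).eval 2 = 2 := by
    rw [eval_decimationPoly]; field_simp; ring
  intro y hy
  fin_cases i
  · exact intermediate_value_Icc (by positivity) hcont.continuousOn
      (by rwa [eval_zero, eval_first_right])
  · exact intermediate_value_Icc' (by gcongr; linarith) hcont.continuousOn
      (by rwa [eval_second_right, eval_second_left])
  · exact intermediate_value_Icc (by rw [div_le_iff₀ hβ']; linarith) hcont.continuousOn
      (by rwa [eval_third_left, eval_two])

end Decimation

theorem three_preimages_in_interval_general {β y : ℝ} (hβ : 1 < β) (hy : y ∈ Icc 0 2) :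
    {x | (decimationPoly β).eval x = y}.ncard = 3 ∧
      {x | (decimationPoly β).eval x = y} ⊆ Icc 0 2 := by
  have hβ₀ : 0 < β := one_pos.trans hβ
  have hdeg := natDegree_decimationPoly hβ₀
  obtain ⟨hcard, hsub⟩ := ncard_setOf_eval_eq_and_subset_iUnion
    (natDegree_pos_iff_degree_pos.1 (by lia)) (hdeg.trans (Nat.card_fin 3).symm).le
    (pairwise_disjoint_decimationLap hβ) fun i ↦ Icc_subset_image_decimationLap hβ₀ i hy
  exact ⟨hcard.trans (Nat.card_fin 3), hsub.trans (iUnion_subset (decimationLap_subset hβ₀.le))⟩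

/-- For every `y ∈ [0,2]`, the set of real preimages `{x : R_b(x) = y}` has exactly
three elements, all of which lie in `[0,2]`. -/
theorem three_preimages_in_interval (b : ℕ) (hb : 2 ≤ b) :
    ∀ y ∈ Icc (0 : ℝ) 2,
      {x : ℝ | Rb b x = y}.ncard = 3 ∧ {x : ℝ | Rb b x = y} ⊆ Icc (0 : ℝ) 2 := by
  intro y hy
  simpa only [Rb, eval_decimationPoly] using
    three_preimages_in_interval_general (Nat.one_lt_cast.2 hb) hy
end

section
/- The spectrum of the matrix Δ_{1,b} (i.e., its set of real eigenvalues) is exactly {0, b/(b+1), (b+2)/(b+1), 2}. -/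
open Matrix

/-- The level-1 probabilistic graph Laplacian of the bubble-diamond graph, boundary
vertices listed first. -/
noncomputable def Delta1 (b : ℕ) : Matrix (Fin 4) (Fin 4) ℝ :=
  (1 / ((b : ℝ) + 1)) •
    !![(b : ℝ) + 1, 0, -((b : ℝ) + 1), 0;
       0, (b : ℝ) + 1, 0, -((b : ℝ) + 1);
       -1, 0, (b : ℝ) + 1, -(b : ℝ);
       0, -1, -(b : ℝ), (b : ℝ) + 1]

/-!
The reflection of the graph that exchanges its two ends commutes with the Laplacian. Hence the
Laplacian splits into two `2 × 2` matrices, one acting on even functions, with eigenvalues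
`0` and `(b + 2) / (b + 1)`, and one acting on odd functions, with eigenvalues `b / (b + 1)`
and `2`.
-/

section BlockCirculant

variable {n R : Type*} [Fintype n] [DecidableEq n] [CommRing R]

theorem det_fromBlocks_circulant (A B : Matrix n n R) :
    (fromBlocks A B B A).det = (A + B).det * (A - B).det := by
  have triangularization : fromBlocks 1 0 (-1) 1 * fromBlocks A B B A * fromBlocks 1 0 1 1 =
      fromBlocks (A + B) B 0 (A - B) := by
    simp [fromBlocks_multiply, add_comm, sub_eq_add_neg]
  simpa using congrArg det triangularization

theorem charpoly_fromBlocks_circulant (A B : Matrix n n R) :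
    (fromBlocks A B B A).charpoly = (A + B).charpoly * (A - B).charpoly := by
  have charmatrix_add : charmatrix A + -Polynomial.C.mapMatrix B = charmatrix (A + B) := by
    rw [charmatrix, charmatrix, map_add]
    abel
  have charmatrix_sub : charmatrix A - -Polynomial.C.mapMatrix B = charmatrix (A - B) := by
    rw [charmatrix, charmatrix, map_sub]
    abel
  rw [charpoly, charmatrix_fromBlocks, ← RingHom.mapMatrix_apply, det_fromBlocks_circulant,
    charmatrix_add, charmatrix_sub, charpoly, charpoly]

theorem spectrum_fromBlocks_circulant (A B : Matrix n n R) :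
    spectrum R (fromBlocks A B B A) = spectrum R (A + B) ∪ spectrum R (A - B) := by
  ext x
  simp only [Set.mem_union, mem_spectrum_iff_not_isUnit_eval_charpoly,
    charpoly_fromBlocks_circulant, Polynomial.eval_mul, IsUnit.mul_iff, not_and_or]

end BlockCirculant

section LevelOneLaplacian

variable {K : Type*} [Field K]

theorem spectrum_fin_two_of_trace_eq_of_det_eq {A : Matrix (Fin 2) (Fin 2) K} {x y : K}
    (htrace : A.trace = x + y) (hdet : A.det = x * y) : spectrum K A = {x, y} := by
  ext z
  have factorization : z ^ 2 - (x + y) * z + x * y = (z - x) * (z - y) := by ring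
  simp [mem_spectrum_iff_isRoot_charpoly, charpoly_fin_two, htrace, hdet, factorization,
    sub_eq_zero]

/-- The matrix `Delta1 b` with entries in an arbitrary field and with `b` an arbitrary scalar. -/
def levelOneLaplacian (b : K) : Matrix (Fin 4) (Fin 4) K :=
  (1 / (b + 1)) •
    !![b + 1, 0, -(b + 1), 0;
       0, b + 1, 0, -(b + 1);
       -1, 0, b + 1, -b;
       0, -1, -b, b + 1]

/-- The decomposition of the four vertices into two halves, each a boundary vertex followed by its
interior neighbour; exchanging the summands is the reflection of the graph. -/
def halvesEquiv : Fin 2 ⊕ Fin 2 ≃ Fin 4 where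
  toFun := Sum.elim ![0, 2] ![1, 3]
  invFun := ![.inl 0, .inr 0, .inl 1, .inr 1]
  left_inv := by decide
  right_inv := by decide

/-- The block of the level-1 Laplacian acting within one half of the graph. -/
def withinHalf (b : K) : Matrix (Fin 2) (Fin 2) K :=
  !![1, -1; -1 / (b + 1), 1]

/-- The block of the level-1 Laplacian coupling the two halves of the graph, which are joined only
at their interior vertices. -/
def betweenHalves (b : K) : Matrix (Fin 2) (Fin 2) K :=
  !![0, 0; 0, -b / (b + 1)]

variable {b : K}

theorem levelOneLaplacian_eq_reindex (hb : b + 1 ≠ 0) :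
    levelOneLaplacian b = reindexAlgEquiv K K halvesEquiv
      (fromBlocks (withinHalf b) (betweenHalves b) (betweenHalves b) (withinHalf b)) := by
  rw [← AlgEquiv.symm_apply_eq]
  ext (i | i) (j | j) <;> fin_cases i <;> fin_cases j <;>
    simp [levelOneLaplacian, halvesEquiv, withinHalf, betweenHalves, hb, -neg_add_rev,
      div_eq_inv_mul]

theorem spectrum_withinHalf_add_betweenHalves (hb : b + 1 ≠ 0) :
    spectrum K (withinHalf b + betweenHalves b) = {0, (b + 2) / (b + 1)} := by
  have even_part : withinHalf b + betweenHalves b = !![1, -1; -1 / (b + 1), 1 + -b / (b + 1)] := by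
    simp [withinHalf, betweenHalves]
  rw [even_part]
  apply spectrum_fin_two_of_trace_eq_of_det_eq
  · rw [trace_fin_two_of]
    field_simp
    ring
  · rw [det_fin_two_of]
    field_simp
    ring

theorem spectrum_withinHalf_sub_betweenHalves (hb : b + 1 ≠ 0) :
    spectrum K (withinHalf b - betweenHalves b) = {b / (b + 1), 2} := by
  have odd_part : withinHalf b - betweenHalves b = !![1, -1; -1 / (b + 1), 1 - -b / (b + 1)] := by
    simp [withinHalf, betweenHalves]
  rw [odd_part]
  apply spectrum_fin_two_of_trace_eq_of_det_eq
  · rw [trace_fin_two_of]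
    field_simp
    ring
  · rw [det_fin_two_of]
    field_simp
    ring

theorem spectrum_of_level_one_laplacian_general (hb : b + 1 ≠ 0) :
    spectrum K (levelOneLaplacian b) = {0, b / (b + 1), (b + 2) / (b + 1), 2} := by
  rw [levelOneLaplacian_eq_reindex hb, AlgEquiv.spectrum_eq, spectrum_fromBlocks_circulant,
    spectrum_withinHalf_add_betweenHalves hb, spectrum_withinHalf_sub_betweenHalves hb,
    Set.insert_union, Set.singleton_union, Set.insert_comm ((b + 2) / (b + 1))]

end LevelOneLaplacian

/-- The spectrum of `Δ_{1,b}` (its set of real eigenvalues) is exactly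
`{0, b/(b+1), (b+2)/(b+1), 2}`. -/
theorem spectrum_of_level_one_laplacian (b : ℕ) (hb : 2 ≤ b) :
    spectrum ℝ (Delta1 b) =
      {0, (b : ℝ) / ((b : ℝ) + 1), ((b : ℝ) + 2) / ((b : ℝ) + 1), 2} := by
  exact spectrum_of_level_one_laplacian_general b.cast_add_one_ne_zero
end

section
/- There exists a constant C > 1 such that |R_b'(x)| ≥ C for every x ∈ [0,2] \ (E_1^0 ∪ E_1^1); that is, R_b is uniformly expanding on the complement of the two level-one gap intervals inside [0,2]. -/
open Set

/-!
In the coordinate `u = (b + 1) * (x - 1)` the roots of `Rb b` are `-(b + 1)`, `1` and `b`, which sum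
to zero, so `Rb b` is a depressed cubic and its derivative is an affine function of `u ^ 2`, namely
`(3 * u ^ 2 - (b ^ 2 + b + 1)) / b`. The two gaps are `-b < u < -1` and `1 < u < b`, that is
`1 < |u| < b`. Off the gaps, `u ^ 2` is at most `1` or at least `b ^ 2`, and the derivative is at
most `-(b - 1) * (b + 2) / b` or at least `(b - 1) * (2 * b + 1) / b`, respectively. The smaller of
the two absolute values, `(b - 1) * (b + 2) / b`, exceeds `1` once `b ≥ 2`.
-/

/-- The union `E_1^0 ∪ E_1^1` of the level-one gap intervals of `Rb b`, off which `Rb b` is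
expanding. -/
def levelOneGaps (b : ℕ) : Set ℝ :=
  Ioo (1 / ((b : ℝ) + 1)) ((b : ℝ) / ((b : ℝ) + 1)) ∪
    Ioo (((b : ℝ) + 2) / ((b : ℝ) + 1)) ((2 * (b : ℝ) + 1) / ((b : ℝ) + 1))

theorem mem_levelOneGaps_iff (b : ℕ) (x : ℝ) :
    x ∈ levelOneGaps b ↔ |((b : ℝ) + 1) * (x - 1)| ∈ Ioo 1 (b : ℝ) := by
  have hb : (0 : ℝ) < b + 1 := by positivity
  have hleft : x ∈ Ioo (1 / ((b : ℝ) + 1)) (b / (b + 1)) ↔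
      ((b : ℝ) + 1) * (x - 1) ∈ Ioo (-(b : ℝ)) (-1) := by
    rw [mem_Ioo, mem_Ioo, div_lt_iff₀ hb, lt_div_iff₀ hb]
    constructor <;> rintro ⟨_, _⟩ <;> constructor <;> linarith
  have hright : x ∈ Ioo (((b : ℝ) + 2) / (b + 1)) ((2 * b + 1) / (b + 1)) ↔
      ((b : ℝ) + 1) * (x - 1) ∈ Ioo 1 (b : ℝ) := by
    rw [mem_Ioo, mem_Ioo, div_lt_iff₀ hb, lt_div_iff₀ hb]
    constructor <;> rintro ⟨_, _⟩ <;> constructor <;> linarith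
  rw [levelOneGaps, mem_union, hleft, hright]
  simp only [mem_Ioo]
  grind

theorem Rb_eq_depressed_cubic (b : ℕ) (x : ℝ) :
    Rb b x = ((((b : ℝ) + 1) * (x - 1)) ^ 3
      - ((b : ℝ) ^ 2 + b + 1) * (((b : ℝ) + 1) * (x - 1)) + b * (b + 1)) / (b + 1) / b := by
  have hb : (b : ℝ) + 1 ≠ 0 := by positivity
  rw [Rb, div_mul_eq_mul_div, div_mul_eq_mul_div]
  congr 1
  rw [eq_div_iff hb]
  ring

theorem hasDerivAt_Rb (b : ℕ) (x : ℝ) :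
    HasDerivAt (Rb b)
      ((3 * (((b : ℝ) + 1) * (x - 1)) ^ 2 - ((b : ℝ) ^ 2 + b + 1)) / b) x := by
  have hb : (b : ℝ) + 1 ≠ 0 := by positivity
  have hu : HasDerivAt (fun z : ℝ => ((b : ℝ) + 1) * (z - 1)) (b + 1) x := by
    simpa only [mul_one] using ((hasDerivAt_id' x).sub_const 1).const_mul ((b : ℝ) + 1)
  have hcubic := ((((hu.fun_pow 3).fun_sub (hu.const_mul ((b : ℝ) ^ 2 + b + 1))).add_const
    ((b : ℝ) * (b + 1))).div_const ((b : ℝ) + 1)).div_const (b : ℝ)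
  rw [funext (Rb_eq_depressed_cubic b)]
  refine hcubic.congr_deriv ?_
  congr 1
  rw [div_eq_iff hb]
  push_cast
  ring

theorem le_abs_three_mul_sq_sub {K : Type*} [CommRing K] [LinearOrder K] [IsStrictOrderedRing K]
    {b u : K} (hb : 1 ≤ b) (hu : |u| ∉ Ioo 1 b) :
    (b - 1) * (b + 2) ≤ |3 * u ^ 2 - (b ^ 2 + b + 1)| := by
  rcases le_or_gt |u| 1 with hnear | hfar
  · have hsq : u ^ 2 ≤ 1 := (sq_le_one_iff_abs_le_one u).2 hnear
    calc (b - 1) * (b + 2) ≤ -(3 * u ^ 2 - (b ^ 2 + b + 1)) := by linarith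
      _ ≤ |3 * u ^ 2 - (b ^ 2 + b + 1)| := neg_le_abs _
  · have hbu : b ≤ |u| := not_lt.1 fun h => hu ⟨hfar, h⟩
    have hsq : b ^ 2 ≤ u ^ 2 := sq_le_sq.2 (by rwa [abs_of_nonneg (zero_le_one.trans hb)])
    calc (b - 1) * (b + 2) ≤ (b - 1) * (2 * b + 1) :=
          mul_le_mul_of_nonneg_left (by linarith) (sub_nonneg.2 hb)
      _ ≤ 3 * u ^ 2 - (b ^ 2 + b + 1) := by linarith
      _ ≤ |3 * u ^ 2 - (b ^ 2 + b + 1)| := le_abs_self _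

theorem le_abs_deriv_Rb_of_notMem_levelOneGaps {b : ℕ} (hb : 1 ≤ b) {x : ℝ}
    (hx : x ∉ levelOneGaps b) :
    ((b : ℝ) - 1) * (b + 2) / b ≤ |deriv (Rb b) x| := by
  rw [mem_levelOneGaps_iff] at hx
  rw [(hasDerivAt_Rb b x).deriv, abs_div, Nat.abs_cast]
  gcongr
  exact le_abs_three_mul_sq_sub (mod_cast hb) hx

theorem uniformly_expanding_off_gaps_general (b : ℕ) (hb : 2 ≤ b) :
    ∃ C : ℝ, 1 < C ∧ ∀ x ∉ levelOneGaps b, C ≤ |deriv (Rb b) x| := by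
  have hb' : (2 : ℝ) ≤ b := mod_cast hb
  refine ⟨((b : ℝ) - 1) * (b + 2) / b, ?_, fun x hx =>
    le_abs_deriv_Rb_of_notMem_levelOneGaps (one_le_two.trans hb) hx⟩
  rw [one_lt_div (by linarith)]
  calc (b : ℝ) < b + 2 := by linarith
    _ ≤ (b - 1) * (b + 2) := le_mul_of_one_le_left (by linarith) (by linarith)

/-- There is `C > 1` with `|R_b'(x)| ≥ C` for every
`x ∈ [0,2] \ (E₁⁰ ∪ E₁¹)`, where `E₁⁰ = (1/(b+1), b/(b+1))` and
`E₁¹ = ((b+2)/(b+1), (2b+1)/(b+1))`: `R_b` is uniformly expanding on the complement of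
the two level-one gap intervals inside `[0,2]`. -/
theorem uniformly_expanding_off_gaps (b : ℕ) (hb : 2 ≤ b) :
    ∃ C : ℝ, 1 < C ∧
      ∀ x ∈ Icc (0 : ℝ) 2 \
        (Ioo (1 / ((b : ℝ) + 1)) ((b : ℝ) / ((b : ℝ) + 1)) ∪
         Ioo (((b : ℝ) + 2) / ((b : ℝ) + 1)) ((2 * (b : ℝ) + 1) / ((b : ℝ) + 1))),
        C ≤ |deriv (Rb b) x| := by
  obtain ⟨C, hC, hexp⟩ := uniformly_expanding_off_gaps_general b hb
  exact ⟨C, hC, fun x hx => hexp x hx.2⟩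
end

section
/- The measure ν_b is a probability measure on ℝ (its total mass equals 1), and its topological support equals J_b, the closure of ⋃_{m≥0} P_m. -/
/-!
On `[0, 2]` the cubic `R_b` sweeps the interval `[0, 2]` three times, up, down and up, and it maps
the complement of `(0, 2)` into itself. Hence every point of `(0, 2)` has exactly three preimages,
all of them in `(0, 2)`, so `P_m` has `2 · 3 ^ m` elements and the total mass of `ν_b` is a
geometric series of ratio `3 / (b + 2)`. The support of a sum of point masses with positive weights
is the closure of the set of its atoms.
-/

open Set MeasureTheory

/-- The exceptional set `E_b = {1/(b+1), (2b+1)/(b+1)}`. -/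
noncomputable def Eb (b : ℕ) : Set ℝ :=
  {1 / ((b : ℝ) + 1), (2 * (b : ℝ) + 1) / ((b : ℝ) + 1)}

/-- The `m`-th preimage set `P_m = {x : R_b^∘m(x) ∈ E_b}`. -/
noncomputable def Pm (b m : ℕ) : Set ℝ := {x : ℝ | (Rb b)^[m] x ∈ Eb b}

/-- The density of states `ν_b = Σ_m ((b−1)/(2(b+2)^{m+1})) Σ_{λ ∈ P_m} δ_λ`. -/
noncomputable def nub (b : ℕ) : Measure ℝ :=
  Measure.sum fun m : ℕ =>
    ENNReal.ofReal (((b : ℝ) - 1) / (2 * ((b : ℝ) + 2) ^ (m + 1))) •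
      Measure.sum fun lam : Pm b m => Measure.dirac (lam : ℝ)

section Counting

variable {α β : Type*}

lemma encard_preimage_eq_mul {f : α → β} {s : Set β} {k : ℕ}
    (hf : ∀ y ∈ s, (f ⁻¹' {y}).encard = k) : (f ⁻¹' s).encard = k * s.encard := by
  let e (y : s) : {x // f x = y} ≃ Fin k :=
    have : Finite {x // f x = y} := finite_of_encard_eq_coe (hf y y.2)
    Finite.equivFinOfCardEq (congrArg ENat.toNat (hf y y.2))
  calc (f ⁻¹' s).encard
      = ENat.card (s × Fin k) :=
        ENat.card_congr ((Equiv.sigmaSubtypeFiberEquivSubtype f fun _ => Iff.rfl).symm.trans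
          ((Equiv.sigmaCongrRight e).trans (Equiv.sigmaEquivProd s (Fin k))))
    _ = k * s.encard := by simp [ENat.card_prod, mul_comm]

lemma encard_iterate_preimage_eq_pow_mul {f : α → α} {s t : Set α} {k : ℕ}
    (hf : ∀ y ∈ t, (f ⁻¹' {y}).encard = k) (ht : f ⁻¹' t ⊆ t) (hst : s ⊆ t) (m : ℕ) :
    (f^[m] ⁻¹' s).encard = k ^ m * s.encard := by
  induction m generalizing s with
  | zero => simp
  | succ m ih =>
    rw [Function.iterate_succ', preimage_comp, ih ((preimage_mono hst).trans ht),
      encard_preimage_eq_mul fun y hy => hf y (hst hy), pow_succ, mul_assoc]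

lemma encard_preimage_eval_le_natDegree {R : Type*} [CommRing R] [IsDomain R]
    {p : Polynomial R} {a : R} (hp : p ≠ Polynomial.C a) :
    (p.eval ⁻¹' {a}).encard ≤ p.natDegree := by
  rw [Polynomial.preimage_eval_singleton hp, ← (Polynomial.rootSet_finite _ _).cast_ncard_eq]
  exact_mod_cast (Polynomial.ncard_rootSet_le _ _).trans_eq Polynomial.natDegree_sub_C

lemma three_le_encard_preimage_of_zigzag [ConditionallyCompleteLinearOrder α] [TopologicalSpace α]
    [OrderTopology α] [DenselyOrdered α] [LinearOrder β] [TopologicalSpace β]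
    [OrderClosedTopology β] {f : α → β} (hf : Continuous f) {a₁ b₁ a₂ b₂ a₃ b₃ : α} {y : β}
    (h₁ : a₁ ≤ b₁) (h₁₂ : b₁ ≤ a₂) (h₂ : a₂ ≤ b₂) (h₂₃ : b₂ ≤ a₃) (h₃ : a₃ ≤ b₃)
    (hy₁ : y ∈ Ioo (f a₁) (f b₁)) (hy₂ : y ∈ Ioo (f b₂) (f a₂)) (hy₃ : y ∈ Ioo (f a₃) (f b₃)) :
    3 ≤ (f ⁻¹' {y}).encard := by
  obtain ⟨x₁, hx₁, rfl⟩ := intermediate_value_Ioo h₁ hf.continuousOn hy₁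
  obtain ⟨x₂, hx₂, hfx₂⟩ := intermediate_value_Ioo' h₂ hf.continuousOn hy₂
  obtain ⟨x₃, hx₃, hfx₃⟩ := intermediate_value_Ioo h₃ hf.continuousOn hy₃
  have hlt₁₂ : x₁ < x₂ := hx₁.2.trans_le (h₁₂.trans hx₂.1.le)
  have hlt₂₃ : x₂ < x₃ := hx₂.2.trans_le (h₂₃.trans hx₃.1.le)
  have hcard : ({x₁, x₂, x₃} : Set α).encard = 3 :=
    encard_eq_three.2 ⟨x₁, x₂, x₃, hlt₁₂.ne, (hlt₁₂.trans hlt₂₃).ne, hlt₂₃.ne, rfl⟩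
  rw [← hcard]
  refine encard_le_encard ?_
  rintro x (rfl | rfl | rfl)
  exacts [rfl, hfx₂, hfx₃]

end Counting

section Support

variable {X ι : Type*} [TopologicalSpace X]

lemma closure_iUnion_closure (s : ι → Set X) :
    closure (⋃ i, closure (s i)) = closure (⋃ i, s i) :=
  (closure_minimal (iUnion_subset fun i => closure_mono (subset_iUnion s i))
    isClosed_closure).antisymm (closure_mono (iUnion_mono fun _ => subset_closure))

variable [MeasurableSpace X]

lemma support_smul_measure {c : ENNReal} (hc : c ≠ 0) (μ : Measure X) :
    (c • μ).support = μ.support := by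
  ext x
  simp [Measure.mem_support_iff_forall, pos_iff_ne_zero, hc]

lemma support_dirac [OpensMeasurableSpace X] (a : X) :
    (Measure.dirac a).support = closure {a} := by
  ext x
  rw [Measure.support_eq_forall_isOpen, mem_ofPred_eq, mem_closure_iff]
  refine forall_congr' fun U => forall_comm.trans (forall₂_congr fun hU _ => ?_)
  simp [Measure.dirac_apply' _ hU.measurableSet, pos_iff_ne_zero]

lemma support_measure_sum [OpensMeasurableSpace X] [HereditarilyLindelofSpace X]
    (μ : ι → Measure X) : (Measure.sum μ).support = closure (⋃ i, (μ i).support) := by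
  refine (Measure.support_subset_of_isClosed isClosed_closure ?_).antisymm
    (closure_minimal (iUnion_subset fun i => Measure.support_mono (Measure.le_sum μ i))
      Measure.isClosed_support)
  rw [mem_ae_iff, Measure.sum_apply _ isClosed_closure.isOpen_compl.measurableSet,
    ENNReal.tsum_eq_zero]
  exact fun i => measure_mono_null
    (compl_subset_compl.2 ((subset_iUnion _ i).trans subset_closure)) Measure.measure_compl_support

lemma support_sum_dirac [OpensMeasurableSpace X] [HereditarilyLindelofSpace X] (f : ι → X) :
    (Measure.sum fun i => Measure.dirac (f i)).support = closure (range f) := by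
  simp only [support_measure_sum, support_dirac, closure_iUnion_closure, iUnion_singleton_eq_range]

end Support

lemma sum_dirac_univ {X : Type*} [MeasurableSpace X] (s : Set X) :
    (Measure.sum fun x : s => Measure.dirac (x : X)) univ = s.encard := by
  simp [Measure.sum_apply _ MeasurableSet.univ]

lemma hasSum_sub_div_pow_succ_mul_pow {K : Type*} [NormedField K] {r d : K} (h : ‖r‖ < ‖d‖) :
    HasSum (fun m : ℕ => (d - r) / d ^ (m + 1) * r ^ m) 1 := by
  have hd : d ≠ 0 := norm_pos_iff.1 ((norm_nonneg r).trans_lt h)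
  have hdr : d - r ≠ 0 := sub_ne_zero.2 fun hdr => h.ne' (congrArg _ hdr)
  have hratio : ‖r / d‖ < 1 := by
    rwa [norm_div, div_lt_one (norm_pos_iff.2 hd)]
  convert! (hasSum_geometric_of_norm_lt_one hratio).mul_left ((d - r) / d) using 1
  · ext m
    rw [div_pow, pow_succ]
    field_simp
  · field_simp

section SpectralDecimation

variable {b : ℕ}

lemma continuous_Rb (b : ℕ) : Continuous (Rb b) := by
  unfold Rb
  fun_prop

lemma Rb_sub_two (hb : b ≠ 0) (z : ℝ) :
    Rb b z - 2 = (z - 2) / b * ((b + 1) * z - 1) * ((b + 1) * z - b) := by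
  unfold Rb
  field_simp
  ring

lemma Rb_nonpos_of_nonpos {z : ℝ} (hz : z ≤ 0) : Rb b z ≤ 0 := by
  have hzb : z / b ≤ 0 := div_nonpos_of_nonpos_of_nonneg hz b.cast_nonneg
  have hmul : ((b : ℝ) + 1) * z ≤ 0 := mul_nonpos_of_nonneg_of_nonpos (by positivity) hz
  exact mul_nonpos_of_nonneg_of_nonpos
    (mul_nonneg_of_nonpos_of_nonpos hzb (by linarith)) (by linarith)

lemma two_le_Rb_of_two_le (hb : b ≠ 0) {z : ℝ} (hz : 2 ≤ z) : 2 ≤ Rb b z := by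
  have hmul : ((b : ℝ) + 1) * 2 ≤ (b + 1) * z := by gcongr
  have hb' : (0 : ℝ) ≤ b := b.cast_nonneg
  rw [← sub_nonneg, Rb_sub_two hb]
  exact mul_nonneg (mul_nonneg (div_nonneg (by linarith) hb') (by linarith)) (by linarith)

lemma preimage_Rb_Ioo_subset_Ioo (hb : b ≠ 0) : Rb b ⁻¹' Ioo 0 2 ⊆ Ioo 0 2 := fun _ hz =>
  ⟨lt_of_not_ge fun h => hz.1.not_ge (Rb_nonpos_of_nonpos h),
    lt_of_not_ge fun h => hz.2.not_ge (two_le_Rb_of_two_le hb h)⟩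

open Polynomial in
lemma exists_polynomial_eval_eq_Rb (hb : b ≠ 0) : ∃ p : ℝ[X], p.natDegree = 3 ∧ p.eval = Rb b := by
  refine ⟨C (b : ℝ)⁻¹ * X * (C ((b : ℝ) + 1) * X - C (2 * (b : ℝ) + 1)) *
    (C ((b : ℝ) + 1) * X - C ((b : ℝ) + 2)), ?_, ?_⟩
  · compute_degree!
  · ext z
    simp [Rb, div_eq_inv_mul]

lemma encard_Rb_fiber_le_three (hb : b ≠ 0) (y : ℝ) : (Rb b ⁻¹' {y}).encard ≤ 3 := by
  obtain ⟨p, hdeg, hp⟩ := exists_polynomial_eval_eq_Rb hb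
  have hpy : p ≠ Polynomial.C y := by
    rintro rfl
    simp at hdeg
  simpa [hp, hdeg] using encard_preimage_eval_le_natDegree hpy

lemma three_le_encard_Rb_fiber (hb : 2 ≤ b) {y : ℝ} (hy : y ∈ Ioo 0 2) :
    3 ≤ (Rb b ⁻¹' {y}).encard := by
  have hb₂ : (2 : ℝ) ≤ b := by exact_mod_cast hb
  have hb₀ : (b : ℝ) ≠ 0 := by positivity
  have zero₁ : Rb b 0 = 0 := by simp [Rb]
  have two₁ : Rb b (1 / (b + 1)) = 2 := by unfold Rb; field_simp; ring
  have two₂ : Rb b (b / (b + 1)) = 2 := by unfold Rb; field_simp; ring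
  have zero₂ : Rb b ((b + 2) / (b + 1)) = 0 := by unfold Rb; field_simp; ring
  have zero₃ : Rb b ((2 * b + 1) / (b + 1)) = 0 := by unfold Rb; field_simp; ring
  have two₃ : Rb b 2 = 2 := by unfold Rb; field_simp; ring
  refine three_le_encard_preimage_of_zigzag (continuous_Rb b)
    (a₁ := 0) (b₁ := 1 / (b + 1)) (a₂ := b / (b + 1)) (b₂ := (b + 2) / (b + 1))
    (a₃ := (2 * b + 1) / (b + 1)) (b₃ := 2) (by positivity) (by gcongr; linarith)
    (by gcongr; linarith) (by gcongr ?_ / _; linarith) ?_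
    (by rwa [zero₁, two₁]) (by rwa [zero₂, two₂]) (by rwa [zero₃, two₃])
  rw [div_le_iff₀ (by positivity)]
  linarith

lemma encard_Rb_fiber (hb : 2 ≤ b) {y : ℝ} (hy : y ∈ Ioo 0 2) : (Rb b ⁻¹' {y}).encard = 3 :=
  (encard_Rb_fiber_le_three (by lia) y).antisymm (three_le_encard_Rb_fiber hb hy)

lemma Eb_subset_Ioo (b : ℕ) : Eb b ⊆ Ioo 0 2 := by
  have hb : (0 : ℝ) < b + 1 := by positivity
  rintro z (rfl | rfl) <;> refine ⟨by positivity, ?_⟩ <;> rw [div_lt_iff₀ hb] <;> linarith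

lemma encard_Eb (hb : b ≠ 0) : (Eb b).encard = 2 := by
  refine encard_pair fun h => hb ?_
  field_simp at h
  simpa using h

lemma encard_Pm (hb : 2 ≤ b) (m : ℕ) : (Pm b m).encard = 3 ^ m * 2 := by
  rw [← encard_Eb (by lia : b ≠ 0)]
  exact encard_iterate_preimage_eq_pow_mul (fun _ hy => encard_Rb_fiber hb hy)
    (preimage_Rb_Ioo_subset_Ioo (by lia)) (Eb_subset_Ioo b) m

end SpectralDecimation

section DensityOfStates

variable {b : ℕ}

lemma nub_weight_pos (hb : 2 ≤ b) (m : ℕ) : 0 < ((b : ℝ) - 1) / (2 * ((b : ℝ) + 2) ^ (m + 1)) := by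
  have hb' : (1 : ℝ) < b := by exact_mod_cast hb
  exact div_pos (sub_pos.2 hb') (by positivity)

lemma hasSum_nub_weight_mul_card (hb : 2 ≤ b) :
    HasSum (fun m : ℕ => ((b : ℝ) - 1) / (2 * ((b : ℝ) + 2) ^ (m + 1)) * (3 ^ m * 2)) 1 := by
  have hb' : (1 : ℝ) < b := by exact_mod_cast hb
  have hnorm : ‖(3 : ℝ)‖ < ‖(b : ℝ) + 2‖ := by
    rw [Real.norm_of_nonneg (by positivity), Real.norm_of_nonneg (by positivity)]
    linarith
  convert! hasSum_sub_div_pow_succ_mul_pow hnorm using 2 with m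
  field_simp
  ring

lemma nub_univ (hb : 2 ≤ b) : nub b univ = 1 := by
  have hterm (m : ℕ) : ENNReal.ofReal (((b : ℝ) - 1) / (2 * ((b : ℝ) + 2) ^ (m + 1))) *
      (Measure.sum fun x : Pm b m => Measure.dirac (x : ℝ)) univ =
      ENNReal.ofReal (((b : ℝ) - 1) / (2 * ((b : ℝ) + 2) ^ (m + 1)) * (3 ^ m * 2)) := by
    rw [sum_dirac_univ, encard_Pm hb, ENNReal.ofReal_mul (nub_weight_pos hb m).le]
    congr 1
    simp [ENNReal.ofReal_mul, ENNReal.ofReal_pow]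
  have hsum := hasSum_nub_weight_mul_card hb
  rw [nub, Measure.sum_apply _ MeasurableSet.univ]
  simp only [Measure.smul_apply, smul_eq_mul, hterm]
  rw [← ENNReal.ofReal_tsum_of_nonneg _ hsum.summable, hsum.tsum_eq, ENNReal.ofReal_one]
  exact fun m => mul_nonneg (nub_weight_pos hb m).le (by positivity)

lemma support_nub (hb : 2 ≤ b) : (nub b).support = closure (⋃ m, Pm b m) := by
  have hweight (m : ℕ) := (ENNReal.ofReal_pos.2 (nub_weight_pos hb m)).ne'
  calc (nub b).support
      = closure (⋃ m, closure (Pm b m)) := by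
        rw [nub, support_measure_sum]
        simp_rw [support_smul_measure (hweight _), support_sum_dirac, Subtype.range_coe]
    _ = closure (⋃ m, Pm b m) := closure_iUnion_closure _

end DensityOfStates

/-- `ν_b` is a probability measure, and its topological support (the set of points all
of whose open neighborhoods have nonzero measure) equals `J_b`, the closure of
`⋃_{m≥0} P_m`. -/
theorem nub_probability_and_support (b : ℕ) (hb : 2 ≤ b) :
    nub b Set.univ = 1 ∧
    {x : ℝ | ∀ U : Set ℝ, IsOpen U → x ∈ U → nub b U ≠ 0} =
      closure (⋃ m : ℕ, Pm b m) := by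
  refine ⟨nub_univ hb, ?_⟩
  rw [← support_nub hb, Measure.support_eq_forall_isOpen]
  ext x
  simp only [mem_ofPred_eq, pos_iff_ne_zero]
  exact forall_congr' fun U => forall_comm
end

section
/- The density of states satisfies the self-similarity functional equation at atoms: for every x ∈ ℝ, 2(b+2)·ν_b({x}) = 2·ν_b({R_b(x)}) + (b−1)·𝟙_{E_b}(x), where 𝟙_{E_b} is the indicator function of the exceptional set. In particular, ν_b({x}) = ν_b({R_b(x)})/(b+2) whenever x ∉ E_b. -/
/-!
A point `x` lies in `P_{m+1}` exactly when `R_b(x)` lies in `P_m`, and the weight of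
`P_{m+1}` is `1/(b+2)` times that of `P_m`. Hence, in the series for `ν_b({x})`, the terms
`m ≥ 1` add up to `ν_b({R_b(x)})/(b+2)`, and the term `m = 0` is the contribution of `E_b`.
-/

open Set MeasureTheory ENNReal

section IteratedPreimage

variable {α : Type*} [MeasurableSpace α]

/-- The sum of the Dirac masses `c m • δ_y` over all `m` and all `y` in the `m`-fold iterated
preimage of `E` under `f`: the shape of a density of states produced by spectral decimation, with
`f` the decimation function and `E` the exceptional set. A point receives mass from every `m` for
which it is such a preimage. -/
noncomputable def iteratedPreimageMeasure (f : α → α) (E : Set α) (c : ℕ → ℝ≥0∞) : Measure α :=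
  Measure.sum fun m => c m • Measure.sum fun y : f^[m] ⁻¹' E => Measure.dirac (y : α)

variable [MeasurableSingletonClass α]

lemma sum_dirac_coe_singleton (s : Set α) (x : α) :
    Measure.sum (fun y : s => Measure.dirac (y : α)) {x} = s.indicator (fun _ => 1) x := by
  calc Measure.sum (fun y : s => Measure.dirac (y : α)) {x}
    _ = ∑' y : s, ({x} : Set α).indicator (fun _ => 1) (y : α) := by
        simp only [Measure.sum_apply _ (measurableSet_singleton x), Measure.dirac_apply]
        rfl
    _ = ∑' y, s.indicator (({x} : Set α).indicator fun _ => 1) y := tsum_subtype s _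
    _ = s.indicator (fun _ => 1) x := by
        rw [tsum_eq_single x fun y hy => by simp [hy]]
        by_cases hx : x ∈ s <;> simp [hx]

lemma iteratedPreimageMeasure_singleton (f : α → α) (E : Set α) (c : ℕ → ℝ≥0∞) (x : α) :
    iteratedPreimageMeasure f E c {x} = ∑' m, c m * E.indicator (fun _ => 1) (f^[m] x) := by
  rw [iteratedPreimageMeasure, Measure.sum_apply _ (measurableSet_singleton x)]
  simp only [Measure.smul_apply, sum_dirac_coe_singleton, smul_eq_mul]
  rfl

lemma iteratedPreimageMeasure_singleton_eq_add (f : α → α) (E : Set α) (c : ℕ → ℝ≥0∞) (x : α) :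
    iteratedPreimageMeasure f E c {x} =
      c 0 * E.indicator (fun _ => 1) x +
        iteratedPreimageMeasure f E (fun m => c (m + 1)) {f x} := by
  simp only [iteratedPreimageMeasure_singleton, ← Function.iterate_succ_apply]
  exact tsum_eq_zero_add' ENNReal.summable

lemma iteratedPreimageMeasure_geometric_singleton (f : α → α) (E : Set α) (w r : ℝ≥0∞) (x : α) :
    iteratedPreimageMeasure f E (fun m => w * r ^ m) {x} =
      w * E.indicator (fun _ => 1) x +
        r * iteratedPreimageMeasure f E (fun m => w * r ^ m) {f x} := by
  rw [iteratedPreimageMeasure_singleton_eq_add, pow_zero, mul_one]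
  simp only [iteratedPreimageMeasure_singleton, ← ENNReal.tsum_mul_left, pow_succ',
    mul_left_comm w r, mul_assoc]

end IteratedPreimage

lemma ofReal_div_two_mul_pow_succ (b m : ℕ) :
    ENNReal.ofReal (((b : ℝ) - 1) / (2 * ((b : ℝ) + 2) ^ (m + 1))) =
      ((b : ℝ≥0∞) - 1) / (2 * ((b : ℝ≥0∞) + 2)) * ((b : ℝ≥0∞) + 2)⁻¹ ^ m := by
  have ofReal_add_two : ENNReal.ofReal ((b : ℝ) + 2) = (b : ℝ≥0∞) + 2 := by
    rw [ENNReal.ofReal_add b.cast_nonneg zero_le_two, ofReal_natCast, ofReal_ofNat]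
  have ofReal_sub_one : ENNReal.ofReal ((b : ℝ) - 1) = (b : ℝ≥0∞) - 1 := by
    rw [ofReal_sub _ zero_le_one, ofReal_natCast, ofReal_one]
  have factor_ratio : ((b : ℝ) - 1) / (2 * ((b : ℝ) + 2) ^ (m + 1)) =
      ((b : ℝ) - 1) / (2 * ((b : ℝ) + 2)) * ((b : ℝ) + 2)⁻¹ ^ m := by
    rw [inv_pow, pow_succ']
    field_simp
  rw [factor_ratio, ofReal_mul' (by positivity), ofReal_div_of_pos (by positivity),
    ofReal_mul zero_le_two, ofReal_pow (by positivity), ofReal_inv_of_pos (by positivity),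
    ofReal_add_two, ofReal_sub_one, ofReal_ofNat]

lemma nub_eq_iteratedPreimageMeasure (b : ℕ) :
    nub b = iteratedPreimageMeasure (Rb b) (Eb b) fun m =>
      ((b : ℝ≥0∞) - 1) / (2 * ((b : ℝ≥0∞) + 2)) * ((b : ℝ≥0∞) + 2)⁻¹ ^ m := by
  simp only [nub, ofReal_div_two_mul_pow_succ]
  rfl

lemma nub_singleton_eq_add (b : ℕ) (x : ℝ) :
    nub b {x} =
      ((b : ℝ≥0∞) - 1) / (2 * ((b : ℝ≥0∞) + 2)) * (Eb b).indicator (fun _ => 1) x +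
        ((b : ℝ≥0∞) + 2)⁻¹ * nub b {Rb b x} := by
  rw [nub_eq_iteratedPreimageMeasure, iteratedPreimageMeasure_geometric_singleton]

/-- Self-similarity of the density of states at atoms: for every `x`,
`2(b+2)·ν_b({x}) = 2·ν_b({R_b(x)}) + (b−1)·𝟙_{E_b}(x)`; in particular
`ν_b({x}) = ν_b({R_b(x)})/(b+2)` whenever `x ∉ E_b`. -/
theorem nub_self_similar_at_atoms (b : ℕ) (hb : 2 ≤ b) :
    (∀ x : ℝ,
      (2 * ((b : ℝ≥0∞) + 2)) * nub b {x} =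
        2 * nub b {Rb b x} +
          ((b : ℝ≥0∞) - 1) * (Eb b).indicator (fun _ => (1 : ℝ≥0∞)) x) ∧
    ∀ x : ℝ, x ∉ Eb b → nub b {x} = nub b {Rb b x} / ((b : ℝ≥0∞) + 2) := by
  refine ⟨fun x => ?_, fun x hx => ?_⟩
  · have weight_cancel : 2 * ((b : ℝ≥0∞) + 2) * (((b : ℝ≥0∞) - 1) / (2 * ((b : ℝ≥0∞) + 2))) =
        (b : ℝ≥0∞) - 1 :=
      ENNReal.mul_div_cancel (by simp) (by finiteness)
    have ratio_cancel : 2 * ((b : ℝ≥0∞) + 2) * ((b : ℝ≥0∞) + 2)⁻¹ = 2 :=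
      ENNReal.mul_inv_cancel_right (by simp) (by finiteness)
    rw [nub_singleton_eq_add, mul_add, ← mul_assoc, ← mul_assoc, weight_cancel, ratio_cancel,
      add_comm]
  · rw [nub_singleton_eq_add, indicator_of_notMem hx, mul_zero, zero_add, ENNReal.div_eq_inv_mul]
end

section
/- There exists a constant C such that for every integer ℓ ≥ 1 and every Borel set A ⊆ ℝ, |ν_b(A) − ν_{ℓ,b}(A)| ≤ C·(3/(b+2))^ℓ; that is, the level-ℓ densities of states converge to ν_b in total variation at a geometric rate. -/
open Set MeasureTheory

/-- The level-`ℓ` density of states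
`ν_{ℓ,b} = Σ_{m=0}^{ℓ−1} (((b−1)(b+2)^{ℓ−m−1}+2)/(2((b+2)^ℓ−1))) Σ_{λ ∈ P_m} δ_λ`. -/
noncomputable def nuLb (b ℓ : ℕ) : Measure ℝ :=
  Measure.sum fun m : Fin ℓ =>
    ENNReal.ofReal ((((b : ℝ) - 1) * ((b : ℝ) + 2) ^ (ℓ - (m : ℕ) - 1) + 2) /
        (2 * (((b : ℝ) + 2) ^ ℓ - 1))) •
      Measure.sum fun lam : Pm b (m : ℕ) => Measure.dirac (lam : ℝ)

/-!
The map `R_b` is a cubic polynomial, so every point has at most three preimages and `P_m` has at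
most `2 * 3 ^ m` points. Put `B = b + 2`. For `m < ℓ` the weights of `P_m` in `ν_{ℓ,b}` and `ν_b`
differ by at most `3 / B ^ ℓ`, so the levels `m < ℓ` contribute at most `3 * (3 / B) ^ ℓ` to the
difference. The levels `m ≥ ℓ` occur only in `ν_b`, and their mass is a geometric tail which sums
to at most `(3 / B) ^ ℓ`.
-/

section Preimages

open Polynomial

variable {α β : Type*}

theorem encard_preimage_le_mul {f : α → β} {k : ℕ∞} (hf : ∀ y, (f ⁻¹' {y}).encard ≤ k)
    (s : Set β) : (f ⁻¹' s).encard ≤ s.encard * k := by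
  rcases eq_or_ne k 0 with rfl | hk
  · have hempty : f ⁻¹' s = ∅ := by
      refine eq_empty_of_forall_notMem fun x _ => ?_
      exact (encard_eq_zero.1 (nonpos_iff_eq_zero.1 (hf (f x)))).le rfl
    simp [hempty]
  rcases s.finite_or_infinite with hs | hs
  · calc (f ⁻¹' s).encard = (⋃ y ∈ s, f ⁻¹' {y}).encard := by rw [biUnion_preimage_singleton]
      _ = (⋃ y ∈ hs.toFinset, f ⁻¹' {y}).encard := by simp only [hs.mem_toFinset]
      _ ≤ ∑ y ∈ hs.toFinset, (f ⁻¹' {y}).encard := hs.toFinset.set_encard_biUnion_le _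
      _ ≤ ∑ _y ∈ hs.toFinset, k := Finset.sum_le_sum fun y _ => hf y
      _ = s.encard * k := by
        rw [Finset.sum_const, nsmul_eq_mul, hs.encard_eq_coe_toFinset_card]
  · rw [hs.encard_eq, ENat.top_mul hk]
    exact le_top

theorem encard_preimage_iterate_le {f : α → α} {k : ℕ∞} (hf : ∀ y, (f ⁻¹' {y}).encard ≤ k)
    (s : Set α) (m : ℕ) : (f^[m] ⁻¹' s).encard ≤ s.encard * k ^ m := by
  induction m with
  | zero => simp
  | succ m ih =>
    calc (f^[m + 1] ⁻¹' s).encard = (f ⁻¹' (f^[m] ⁻¹' s)).encard := by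
          rw [Function.iterate_succ, preimage_comp]
      _ ≤ (f^[m] ⁻¹' s).encard * k := encard_preimage_le_mul hf _
      _ ≤ s.encard * k ^ m * k := by gcongr
      _ = s.encard * k ^ (m + 1) := by rw [pow_succ, mul_assoc]

theorem encard_preimage_eval_singleton_le {R : Type*} [CommRing R] [IsDomain R] {p : R[X]}
    (hp : 0 < p.natDegree) (y : R) : ((fun x => p.eval x) ⁻¹' {y}).encard ≤ p.natDegree := by
  have hpy : p ≠ C y := by
    rintro rfl
    exact hp.ne' (natDegree_C y)
  rw [preimage_eval_singleton hpy, ← (rootSet_finite _ R).cast_ncard_eq, ← natDegree_sub_C (a := y)]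
  exact_mod_cast ncard_rootSet_le _ R

end Preimages

section SumsOfMeasures

variable {α : Type*} [MeasurableSpace α]

theorem sum_dirac_apply_le_encard (s A : Set α) :
    (Measure.sum fun x : s => Measure.dirac (x : α)) A ≤ s.encard :=
  calc (Measure.sum fun x : s => Measure.dirac (x : α)) A
      ≤ (Measure.sum fun x : s => Measure.dirac (x : α)) univ := measure_mono (subset_univ A)
    _ = s.encard := by
      simp only [Measure.sum_apply _ MeasurableSet.univ, measure_univ, ENNReal.tsum_set_one]

theorem toReal_sum_ofReal_smul_apply {ι : Type*} {w : ι → ℝ} (hw : ∀ i, 0 ≤ w i)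
    {μ : ι → Measure α} {A : Set α} (hA : MeasurableSet A) (hμA : ∀ i, μ i A ≠ ⊤) :
    ((Measure.sum fun i => ENNReal.ofReal (w i) • μ i) A).toReal = ∑' i, w i * (μ i).real A := by
  simp only [Measure.sum_apply _ hA, Measure.smul_apply, smul_eq_mul]
  rw [ENNReal.tsum_toReal_eq fun i => ENNReal.mul_ne_top ENNReal.ofReal_ne_top (hμA i)]
  simp only [ENNReal.toReal_mul, ENNReal.toReal_ofReal (hw _), Measure.real]

end SumsOfMeasures

section SpectralDecimation

open Polynomial

/-- The polynomial whose evaluation map is `Rb b`; for `b = 0` it is zero. -/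
noncomputable def RbPolynomial (b : ℕ) : ℝ[X] :=
  C (b : ℝ)⁻¹ * X * (C ((b : ℝ) + 1) * X - C (2 * (b : ℝ) + 1)) *
    (C ((b : ℝ) + 1) * X - C ((b : ℝ) + 2))

theorem eval_RbPolynomial (b : ℕ) : (fun x => (RbPolynomial b).eval x) = Rb b := by
  ext x
  simp only [RbPolynomial, Rb, eval_mul, eval_sub, eval_C, eval_X]
  ring

theorem natDegree_RbPolynomial {b : ℕ} (hb : b ≠ 0) : (RbPolynomial b).natDegree = 3 := by
  unfold RbPolynomial
  compute_degree!

theorem encard_Rb_preimage_singleton_le {b : ℕ} (hb : b ≠ 0) (y : ℝ) :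
    (Rb b ⁻¹' {y}).encard ≤ 3 := by
  have hdeg := natDegree_RbPolynomial hb
  simpa only [eval_RbPolynomial, hdeg, Nat.cast_ofNat] using
    encard_preimage_eval_singleton_le (p := RbPolynomial b) (by omega) y

theorem encard_Eb_le (b : ℕ) : (Eb b).encard ≤ 2 := by
  refine (encard_insert_le _ _).trans_eq ?_
  rw [encard_singleton, one_add_one_eq_two]

theorem encard_Pm_le {b : ℕ} (hb : b ≠ 0) (m : ℕ) : (Pm b m).encard ≤ 2 * 3 ^ m :=
  calc (Pm b m).encard ≤ (Eb b).encard * 3 ^ m :=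
        encard_preimage_iterate_le (encard_Rb_preimage_singleton_le hb) (Eb b) m
    _ ≤ 2 * 3 ^ m := by gcongr; exact encard_Eb_le b

/-- The counting measure `Σ_{λ ∈ P_m} δ_λ` of the `m`-th preimage set, the part of the densities of
states carried by level `m`. -/
noncomputable def PmMeasure (b m : ℕ) : Measure ℝ :=
  Measure.sum fun lam : Pm b m => Measure.dirac (lam : ℝ)

theorem PmMeasure_apply_le {b : ℕ} (hb : b ≠ 0) (m : ℕ) (A : Set ℝ) :
    PmMeasure b m A ≤ ENNReal.ofReal (2 * 3 ^ m) := by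
  have hcard : ((Pm b m).encard : ENNReal) ≤ ((2 * 3 ^ m : ℕ∞) : ENNReal) :=
    ENat.toENNReal_le.2 (encard_Pm_le hb m)
  refine (sum_dirac_apply_le_encard (Pm b m) A).trans (hcard.trans_eq ?_)
  rw [ENNReal.ofReal_mul zero_le_two, ENNReal.ofReal_pow zero_le_three]
  simp

theorem PmMeasure_apply_ne_top {b : ℕ} (hb : b ≠ 0) (m : ℕ) (A : Set ℝ) : PmMeasure b m A ≠ ⊤ :=
  ((PmMeasure_apply_le hb m A).trans_lt ENNReal.ofReal_lt_top).ne

theorem PmMeasure_real_le {b : ℕ} (hb : b ≠ 0) (m : ℕ) (A : Set ℝ) :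
    (PmMeasure b m).real A ≤ 2 * 3 ^ m :=
  ENNReal.toReal_le_of_le_ofReal (by positivity) (PmMeasure_apply_le hb m A)

end SpectralDecimation

section Weights

/-- The weight of each point of `P_m` in `nub b`, with the integer `b` replaced by a real `β`. -/
noncomputable def limitWeight (β : ℝ) (m : ℕ) : ℝ :=
  (β - 1) / (2 * (β + 2) ^ (m + 1))

/-- The weight of each point of `P_m` in `nuLb b ℓ`, with the integer `b` replaced by a real `β`.
It is meaningful only for `m < ℓ`, where the subtraction in the exponent is not truncated. -/
noncomputable def levelWeight (β : ℝ) (ℓ m : ℕ) : ℝ :=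
  ((β - 1) * (β + 2) ^ (ℓ - m - 1) + 2) / (2 * ((β + 2) ^ ℓ - 1))

variable {β : ℝ} {ℓ m : ℕ}

theorem limitWeight_nonneg (hβ : 1 ≤ β) (m : ℕ) : 0 ≤ limitWeight β m :=
  div_nonneg (by linarith) (by positivity)

theorem levelWeight_nonneg (hβ : 1 ≤ β) (ℓ m : ℕ) : 0 ≤ levelWeight β ℓ m := by
  have hpow : 1 ≤ (β + 2) ^ ℓ := one_le_pow₀ (by linarith)
  have hnum : 0 ≤ (β - 1) * (β + 2) ^ (ℓ - m - 1) := mul_nonneg (by linarith) (by positivity)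
  exact div_nonneg (by linarith) (by linarith)

theorem limitWeight_mul_two_mul_three_pow (β : ℝ) (m : ℕ) :
    limitWeight β m * (2 * 3 ^ m) = (β - 1) / (β + 2) * (3 / (β + 2)) ^ m := by
  rw [limitWeight, div_pow, pow_succ]
  field

theorem levelWeight_sub_limitWeight (hβ : -1 < β) (hm : m < ℓ) :
    levelWeight β ℓ m - limitWeight β m =
      (2 + (β - 1) / (β + 2) ^ (m + 1)) / (2 * ((β + 2) ^ ℓ - 1)) := by
  have hbase : 0 < β + 2 := by linarith
  have hden : (β + 2) ^ ℓ - 1 ≠ 0 := (sub_pos.2 (one_lt_pow₀ (by linarith) (by omega))).ne'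
  have hsplit : (β + 2) ^ (ℓ - m - 1) = (β + 2) ^ ℓ / (β + 2) ^ (m + 1) := by
    rw [eq_div_iff (by positivity), ← pow_add]
    congr 1
    omega
  rw [levelWeight, limitWeight, hsplit]
  field_simp
  ring

theorem abs_limitWeight_sub_levelWeight_le (hβ : 1 ≤ β) (hm : m < ℓ) :
    |limitWeight β m - levelWeight β ℓ m| ≤ 3 / (β + 2) ^ ℓ := by
  have hbase : 1 ≤ β + 2 := by linarith
  have hpow : 2 ≤ (β + 2) ^ ℓ :=
    (show 2 ≤ β + 2 by linarith).trans (le_self_pow₀ hbase (by omega))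
  have hcorr_nonneg : 0 ≤ (β - 1) / (β + 2) ^ (m + 1) := div_nonneg (by linarith) (by positivity)
  have hcorr_le : (β - 1) / (β + 2) ^ (m + 1) ≤ 1 := by
    rw [div_le_one (by positivity)]
    linarith [le_self_pow₀ hbase (show m + 1 ≠ 0 by omega)]
  rw [abs_sub_comm, levelWeight_sub_limitWeight (by linarith) hm,
    abs_of_nonneg (div_nonneg (by linarith) (by linarith))]
  exact div_le_div₀ (by norm_num) (by linarith) (by linarith) (by linarith)

variable {c : ℕ → ℝ}

theorem abs_sum_limitWeight_sub_sum_levelWeight_le (hβ : 1 ≤ β) (hc : ∀ m, |c m| ≤ 2 * 3 ^ m)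
    (ℓ : ℕ) :
    |∑ m ∈ Finset.range ℓ, limitWeight β m * c m - ∑ m ∈ Finset.range ℓ, levelWeight β ℓ m * c m| ≤
      3 * (3 / (β + 2)) ^ ℓ := by
  have hterm : ∀ m ∈ Finset.range ℓ,
      |limitWeight β m * c m - levelWeight β ℓ m * c m| ≤ 3 / (β + 2) ^ ℓ * (2 * 3 ^ m) := by
    intro m hm
    rw [← sub_mul, abs_mul]
    exact mul_le_mul (abs_limitWeight_sub_levelWeight_le hβ (Finset.mem_range.1 hm)) (hc m)
      (abs_nonneg _) (by positivity)
  rw [← Finset.sum_sub_distrib]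
  calc _ ≤ ∑ m ∈ Finset.range ℓ, 3 / (β + 2) ^ ℓ * (2 * 3 ^ m) :=
        (Finset.abs_sum_le_sum_abs _ _).trans (Finset.sum_le_sum hterm)
    _ = 3 / (β + 2) ^ ℓ * (3 ^ ℓ - 1) := by
      rw [← Finset.mul_sum, ← Finset.mul_sum, geom_sum_eq (by norm_num)]
      ring
    _ ≤ 3 / (β + 2) ^ ℓ * 3 ^ ℓ := by gcongr; linarith
    _ = 3 * (3 / (β + 2)) ^ ℓ := by rw [div_pow]; ring

theorem abs_tsum_limitWeight_sub_sum_range_le (hβ : 1 < β) (hc : ∀ m, |c m| ≤ 2 * 3 ^ m) (ℓ : ℕ) :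
    |∑' m, limitWeight β m * c m - ∑ m ∈ Finset.range ℓ, limitWeight β m * c m| ≤
      (3 / (β + 2)) ^ ℓ := by
  have hbase : 0 < β + 2 := by linarith
  have hratio : 3 / (β + 2) < 1 := by rw [div_lt_one hbase]; linarith
  have hterm : ∀ m, ‖limitWeight β m * c m‖ ≤ (β - 1) / (β + 2) * (3 / (β + 2)) ^ m := by
    intro m
    have hw := limitWeight_nonneg hβ.le m
    rw [norm_mul, Real.norm_of_nonneg hw, ← limitWeight_mul_two_mul_three_pow]
    exact mul_le_mul_of_nonneg_left (hc m) hw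
  have hsummable : Summable fun m => limitWeight β m * c m :=
    .of_norm_bounded ((summable_geometric_of_lt_one (by positivity) hratio).mul_left _) hterm
  have hconst : 1 - 3 / (β + 2) = (β - 1) / (β + 2) := by field
  have htail := norm_sub_le_of_geometric_bound_of_hasSum hratio hterm hsummable.hasSum ℓ
  rwa [norm_sub_rev, Real.norm_eq_abs, hconst,
    mul_div_cancel_left₀ _ (div_pos (by linarith) hbase).ne'] at htail

end Weights

section DensitiesOfStates

variable {b : ℕ} {A : Set ℝ}

theorem toReal_nub_apply (hb : 1 ≤ b) (hA : MeasurableSet A) :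
    (nub b A).toReal = ∑' m, limitWeight b m * (PmMeasure b m).real A :=
  toReal_sum_ofReal_smul_apply (limitWeight_nonneg (by exact_mod_cast hb)) hA
    fun m => PmMeasure_apply_ne_top (by omega) m A

theorem toReal_nuLb_apply (hb : 1 ≤ b) (ℓ : ℕ) (hA : MeasurableSet A) :
    (nuLb b ℓ A).toReal = ∑ m ∈ Finset.range ℓ, levelWeight b ℓ m * (PmMeasure b m).real A := by
  rw [Finset.sum_range, ← tsum_fintype (L := .unconditional (Fin ℓ))]
  exact toReal_sum_ofReal_smul_apply
    (fun m : Fin ℓ => levelWeight_nonneg (by exact_mod_cast hb) ℓ m)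
    hA fun m => PmMeasure_apply_ne_top (by omega) m A

end DensitiesOfStates

/-- There is a constant `C` such that for every `ℓ ≥ 1` and every Borel set `A`,
`|ν_b(A) − ν_{ℓ,b}(A)| ≤ C·(3/(b+2))^ℓ`: the level-`ℓ` densities of states converge to
`ν_b` in total variation at a geometric rate. -/
theorem nuLb_converges_total_variation (b : ℕ) (hb : 2 ≤ b) :
    ∃ C : ℝ, ∀ ℓ : ℕ, 1 ≤ ℓ → ∀ A : Set ℝ, MeasurableSet A →
      |(nub b A).toReal - (nuLb b ℓ A).toReal| ≤ C * (3 / ((b : ℝ) + 2)) ^ ℓ := by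
  have hb1 : (1 : ℝ) < b := by exact_mod_cast hb
  refine ⟨4, fun ℓ _ A hA => ?_⟩
  have hc : ∀ m, |(PmMeasure b m).real A| ≤ 2 * 3 ^ m := fun m => by
    rw [abs_of_nonneg measureReal_nonneg]
    exact PmMeasure_real_le (by omega) m A
  rw [toReal_nub_apply (by omega) hA, toReal_nuLb_apply (by omega) ℓ hA]
  calc _ ≤ _ := abs_sub_le _ (∑ m ∈ Finset.range ℓ, limitWeight b m * (PmMeasure b m).real A) _
    _ ≤ (3 / ((b : ℝ) + 2)) ^ ℓ + 3 * (3 / ((b : ℝ) + 2)) ^ ℓ :=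
      add_le_add (abs_tsum_limitWeight_sub_sum_range_le hb1 hc ℓ)
        (abs_sum_limitWeight_sub_sum_levelWeight_le hb1.le hc ℓ)
    _ = 4 * (3 / ((b : ℝ) + 2)) ^ ℓ := by ring
end

section
/- There exists a constant C such that for every integer ℓ ≥ 1 and every x ∈ ℝ, |N_{ℓ,b}(x) − N_b(x)| ≤ C·(3/(b+2))^ℓ; that is, the normalized eigenvalue counting functions N_{ℓ,b} converge uniformly to N_b at a geometric rate. -/
open Set MeasureTheory

/-- The integrated density of states `N_b(x) = ν_b((−∞, x])`. -/
noncomputable def Nb (b : ℕ) (x : ℝ) : ℝ := (nub b (Iic x)).toReal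

/-- The level-`ℓ` normalized eigenvalue counting function `N_{ℓ,b}(x) = ν_{ℓ,b}((−∞, x])`. -/
noncomputable def NLb (b ℓ : ℕ) (x : ℝ) : ℝ := (nuLb b ℓ (Iic x)).toReal

/-!
`R_b` is a cubic polynomial, so `P_m` has at most `2 * 3 ^ m` points. Write `q = b + 2`, and `w_m`,
`v_m` for the weights of `P_m` in `ν_b` and `ν_{ℓ,b}`. Then `v_m - w_m = (w_m + 1) / (q ^ ℓ - 1)`
is nonnegative for `m < ℓ`, and for `ℓ ≥ 1` geometric sums give
`∑_{m < ℓ} (v_m - w_m) * (2 * 3 ^ m) = (3 / q) ^ ℓ = ∑_{m ≥ ℓ} w_m * (2 * 3 ^ m)`.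
On any set, `ν_{ℓ,b} - ν_b` is therefore a difference of two numbers in `[0, (3 / q) ^ ℓ]`, one from
the levels `m < ℓ` and one from the levels `m ≥ ℓ`.
-/

section IteratedPreimages

open Polynomial

variable {R : Type*} [CommRing R] [IsDomain R] {p : R[X]}

lemma iterate_eval_preimage_eq_rootSet (hp : 0 < p.natDegree) (S : Finset R) (m : ℕ) :
    (fun x => p.eval x)^[m] ⁻¹' S = ((∏ a ∈ S, (X - C a)).comp (p.comp^[m] X)).rootSet R := by
  have hdeg : 0 < (p.comp^[m] X).natDegree := by
    rw [natDegree_iterate_comp, natDegree_X, mul_one]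
    exact pow_pos hp m
  have hne : (∏ a ∈ S, (X - C a)).comp (p.comp^[m] X) ≠ 0 := fun h =>
    (comp_eq_zero_iff.1 h).elim (monic_prod_X_sub_C id S).ne_zero fun hconst =>
      hdeg.ne' (natDegree_eq_zero.2 ⟨_, hconst.2.symm⟩)
  ext x
  simp [mem_rootSet_of_ne hne, eval_comp, iterate_comp_eval, eval_prod, Finset.prod_eq_zero_iff,
    sub_eq_zero]

lemma finite_iterate_eval_preimage (hp : 0 < p.natDegree) (S : Finset R) (m : ℕ) :
    ((fun x => p.eval x)^[m] ⁻¹' S).Finite := by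
  rw [iterate_eval_preimage_eq_rootSet hp]
  exact rootSet_finite _ R

lemma ncard_iterate_eval_preimage_le (hp : 0 < p.natDegree) (S : Finset R) (m : ℕ) :
    ((fun x => p.eval x)^[m] ⁻¹' S).ncard ≤ S.card * p.natDegree ^ m := by
  rw [iterate_eval_preimage_eq_rootSet hp]
  refine (ncard_rootSet_le _ R).trans_eq ?_
  rw [natDegree_comp, natDegree_finsetProd_X_sub_C_eq_card, natDegree_iterate_comp, natDegree_X,
    mul_one]

end IteratedPreimages

section AtomicMeasures

variable {α ι : Type*} [MeasurableSpace α] [MeasurableSingletonClass α]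

lemma sum_dirac_apply_eq_encard {P : Set α} (hP : P.Countable) (s : Set α) :
    (Measure.sum fun a : P => Measure.dirac (a : α)) s = (P ∩ s).encard := by
  have := hP.to_subtype
  simp_rw [Measure.sum_apply_of_countable, Measure.dirac_apply]
  rw [← ENNReal.tsum_set_one, tsum_subtype P, tsum_subtype (P ∩ s) fun _ => 1,
    ← indicator_indicator]
  rfl

lemma sum_smul_sum_dirac_real_apply [Countable ι] {w : ι → ℝ} (hw : ∀ i, 0 ≤ w i)
    {P : ι → Set α} (hP : ∀ i, (P i).Finite) (s : Set α) :
    (Measure.sum fun i => ENNReal.ofReal (w i) •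
      Measure.sum fun a : P i => Measure.dirac (a : α)).real s =
      ∑' i, w i * (P i ∩ s).ncard := by
  have hatoms (i : ι) : (ENNReal.ofReal (w i) •
      Measure.sum fun a : P i => Measure.dirac (a : α)) s =
      ENNReal.ofReal (w i * (P i ∩ s).ncard) := by
    rw [Measure.smul_apply, smul_eq_mul, sum_dirac_apply_eq_encard (hP i).countable,
      ← ((hP i).inter_of_left s).cast_ncard_eq, ENat.toENNReal_coe, ENNReal.ofReal_mul (hw i),
      ENNReal.ofReal_natCast]
  simp_rw [measureReal_def, Measure.sum_apply_of_countable, hatoms]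
  rw [ENNReal.tsum_toReal_eq fun _ => ENNReal.ofReal_ne_top]
  exact tsum_congr fun i => ENNReal.toReal_ofReal (mul_nonneg (hw i) (Nat.cast_nonneg _))

end AtomicMeasures

section PreimageSets

open Polynomial

variable {b : ℕ}

/-- The spectral decimation function `R_b` as a polynomial. -/
noncomputable def RbPoly (b : ℕ) : ℝ[X] :=
  C (b : ℝ)⁻¹ * X * (C ((b : ℝ) + 1) * X - C (2 * (b : ℝ) + 1)) *
    (C ((b : ℝ) + 1) * X - C ((b : ℝ) + 2))

lemma eval_RbPoly (b : ℕ) (x : ℝ) : (RbPoly b).eval x = Rb b x := by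
  simp only [RbPoly, Rb, eval_mul, eval_sub, eval_C, eval_X]
  ring

lemma natDegree_RbPoly (hb : b ≠ 0) : (RbPoly b).natDegree = 3 := by
  unfold RbPoly
  compute_degree!

lemma Pm_eq_iterate_eval_preimage (b m : ℕ) :
    Pm b m = (fun x => (RbPoly b).eval x)^[m] ⁻¹'
      ({1 / ((b : ℝ) + 1), (2 * (b : ℝ) + 1) / ((b : ℝ) + 1)} : Finset ℝ) := by
  simp_rw [eval_RbPoly, Finset.coe_pair]
  rfl

lemma finite_Pm (hb : b ≠ 0) (m : ℕ) : (Pm b m).Finite := by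
  rw [Pm_eq_iterate_eval_preimage]
  exact finite_iterate_eval_preimage (by simp [natDegree_RbPoly hb]) _ m

lemma ncard_Pm_le (hb : b ≠ 0) (m : ℕ) : (Pm b m).ncard ≤ 2 * 3 ^ m := by
  rw [Pm_eq_iterate_eval_preimage]
  refine (ncard_iterate_eval_preimage_le (by simp [natDegree_RbPoly hb]) _ m).trans ?_
  rw [natDegree_RbPoly hb]
  exact Nat.mul_le_mul_right _ Finset.card_le_two

lemma ncard_Pm_inter_le (hb : b ≠ 0) (m : ℕ) (s : Set ℝ) :
    ((Pm b m ∩ s).ncard : ℝ) ≤ 2 * 3 ^ m := by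
  exact_mod_cast (ncard_le_ncard inter_subset_left (finite_Pm hb m)).trans (ncard_Pm_le hb m)

end PreimageSets

section Weights

variable {b ℓ m : ℕ}

/-- The weight `w_m` that `ν_b` gives to each point of `P_m`. -/
noncomputable def nubWeight (b m : ℕ) : ℝ :=
  ((b : ℝ) - 1) / (2 * ((b : ℝ) + 2) ^ (m + 1))

/-- The weight `v_m` that `ν_{ℓ,b}` gives to each point of `P_m`; it is meaningful only for
`m < ℓ`, since the exponent `ℓ - m - 1` is a truncated subtraction. -/
noncomputable def nuLbWeight (b ℓ m : ℕ) : ℝ :=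
  (((b : ℝ) - 1) * ((b : ℝ) + 2) ^ (ℓ - m - 1) + 2) / (2 * (((b : ℝ) + 2) ^ ℓ - 1))

lemma nubWeight_nonneg (hb : 1 ≤ b) (m : ℕ) : 0 ≤ nubWeight b m :=
  div_nonneg (sub_nonneg.2 (by exact_mod_cast hb)) (by positivity)

lemma one_le_add_two_pow (b ℓ : ℕ) : 1 ≤ ((b : ℝ) + 2) ^ ℓ :=
  one_le_pow₀ (by linarith [b.cast_nonneg (α := ℝ)])

lemma nuLbWeight_nonneg (hb : 1 ≤ b) (ℓ m : ℕ) : 0 ≤ nuLbWeight b ℓ m := by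
  have hb' : 0 ≤ (b : ℝ) - 1 := sub_nonneg.2 (by exact_mod_cast hb)
  have hpow := sub_nonneg.2 (one_le_add_two_pow b ℓ)
  unfold nuLbWeight
  positivity

lemma nuLbWeight_sub_nubWeight (b : ℕ) (hm : m < ℓ) :
    nuLbWeight b ℓ m - nubWeight b m = (nubWeight b m + 1) / (((b : ℝ) + 2) ^ ℓ - 1) := by
  have hpow : ((b : ℝ) + 2) ^ ℓ - 1 ≠ 0 :=
    (sub_pos.2 (one_lt_pow₀ (by linarith [b.cast_nonneg (α := ℝ)]) (by omega))).ne'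
  have hsplit : ((b : ℝ) + 2) ^ ℓ = ((b : ℝ) + 2) ^ (ℓ - m - 1) * ((b : ℝ) + 2) ^ (m + 1) := by
    rw [← pow_add]
    congr 1
    omega
  unfold nuLbWeight nubWeight
  field_simp
  rw [hsplit]
  ring

lemma nubWeight_le_nuLbWeight (hb : 1 ≤ b) (hm : m < ℓ) :
    nubWeight b m ≤ nuLbWeight b ℓ m := by
  rw [← sub_nonneg, nuLbWeight_sub_nubWeight b hm]
  exact div_nonneg (add_nonneg (nubWeight_nonneg hb m) zero_le_one)
    (sub_nonneg.2 (one_le_add_two_pow b ℓ))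

lemma nubWeight_mul_two_mul_three_pow (b m : ℕ) :
    nubWeight b m * (2 * 3 ^ m) = (1 - 3 / ((b : ℝ) + 2)) * (3 / ((b : ℝ) + 2)) ^ m := by
  unfold nubWeight
  rw [div_pow]
  field_simp
  ring

lemma sum_nubWeight_add_one_mul (b ℓ : ℕ) :
    ∑ m ∈ Finset.range ℓ, (nubWeight b m + 1) * (2 * 3 ^ m) =
      (3 / ((b : ℝ) + 2)) ^ ℓ * (((b : ℝ) + 2) ^ ℓ - 1) := by
  have hthree : ∑ m ∈ Finset.range ℓ, 2 * (3 : ℝ) ^ m = 3 ^ ℓ - 1 := by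
    rw [← Finset.mul_sum, mul_comm, ← geom_sum_mul]
    norm_num
  have hq : ((b : ℝ) + 2) ^ ℓ ≠ 0 := by positivity
  simp_rw [add_mul, one_mul, nubWeight_mul_two_mul_three_pow]
  rw [Finset.sum_add_distrib, ← Finset.mul_sum, mul_neg_geom_sum, hthree, mul_sub, mul_one,
    div_pow, div_mul_cancel₀ _ hq]
  ring

lemma sum_nuLbWeight_sub_nubWeight_mul_le (b ℓ : ℕ) :
    ∑ m ∈ Finset.range ℓ, (nuLbWeight b ℓ m - nubWeight b m) * (2 * 3 ^ m) ≤
      (3 / ((b : ℝ) + 2)) ^ ℓ := by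
  calc ∑ m ∈ Finset.range ℓ, (nuLbWeight b ℓ m - nubWeight b m) * (2 * 3 ^ m)
      = ∑ m ∈ Finset.range ℓ, (nubWeight b m + 1) * (2 * 3 ^ m) / (((b : ℝ) + 2) ^ ℓ - 1) :=
        Finset.sum_congr rfl fun m hm => by
          rw [nuLbWeight_sub_nubWeight b (Finset.mem_range.1 hm), div_mul_eq_mul_div]
    _ = (3 / ((b : ℝ) + 2)) ^ ℓ * ((((b : ℝ) + 2) ^ ℓ - 1) / (((b : ℝ) + 2) ^ ℓ - 1)) := by
        rw [← Finset.sum_div, sum_nubWeight_add_one_mul, mul_div_assoc]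
    -- An inequality because the quotient is `0 / 0 = 0` for `ℓ = 0`.
    _ ≤ (3 / ((b : ℝ) + 2)) ^ ℓ :=
        mul_le_of_le_one_right (by positivity) (div_self_le_one _)

lemma hasSum_nubWeight_add_mul (hb : 2 ≤ b) (ℓ : ℕ) :
    HasSum (fun m => nubWeight b (m + ℓ) * (2 * 3 ^ (m + ℓ))) ((3 / ((b : ℝ) + 2)) ^ ℓ) := by
  have hb' : (2 : ℝ) ≤ b := by exact_mod_cast hb
  have hr : 3 / ((b : ℝ) + 2) < 1 := (div_lt_one (by positivity)).2 (by linarith)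
  have hgeom := ((hasSum_geometric_of_lt_one (by positivity) hr).mul_right
    ((3 / ((b : ℝ) + 2)) ^ ℓ)).mul_left (1 - 3 / ((b : ℝ) + 2))
  rw [mul_inv_cancel_left₀ (sub_pos.2 hr).ne'] at hgeom
  simp_rw [nubWeight_mul_two_mul_three_pow, pow_add]
  exact hgeom

end Weights

section Comparison

variable {b : ℕ}

lemma nub_real_apply (hb : 1 ≤ b) (s : Set ℝ) :
    (nub b).real s = ∑' m, nubWeight b m * (Pm b m ∩ s).ncard :=
  sum_smul_sum_dirac_real_apply (nubWeight_nonneg hb) (finite_Pm (by omega)) s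

lemma nuLb_real_apply (hb : 1 ≤ b) (ℓ : ℕ) (s : Set ℝ) :
    (nuLb b ℓ).real s = ∑ m ∈ Finset.range ℓ, nuLbWeight b ℓ m * (Pm b m ∩ s).ncard := by
  rw [← Fin.sum_univ_eq_sum_range fun m => nuLbWeight b ℓ m * (Pm b m ∩ s).ncard,
    ← tsum_fintype (L := .unconditional _)]
  exact sum_smul_sum_dirac_real_apply (fun m : Fin ℓ => nuLbWeight_nonneg hb ℓ m)
    (fun m => finite_Pm (by omega) m) s

lemma summable_nubWeight_mul_ncard (hb : 2 ≤ b) (s : Set ℝ) :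
    Summable fun m => nubWeight b m * (Pm b m ∩ s).ncard :=
  (hasSum_nubWeight_add_mul hb 0).summable.of_nonneg_of_le
    (fun m => mul_nonneg (nubWeight_nonneg (by omega) m) (Nat.cast_nonneg _))
    fun m => mul_le_mul_of_nonneg_left (ncard_Pm_inter_le (by omega) m s)
      (nubWeight_nonneg (by omega) m)

lemma nuLb_real_sub_nub_real (hb : 2 ≤ b) (ℓ : ℕ) (s : Set ℝ) :
    (nuLb b ℓ).real s - (nub b).real s =
      ∑ m ∈ Finset.range ℓ, (nuLbWeight b ℓ m - nubWeight b m) * (Pm b m ∩ s).ncard -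
        ∑' m, nubWeight b (m + ℓ) * (Pm b (m + ℓ) ∩ s).ncard := by
  rw [nuLb_real_apply (by omega), nub_real_apply (by omega),
    ← (summable_nubWeight_mul_ncard hb s).sum_add_tsum_nat_add ℓ, ← sub_sub,
    ← Finset.sum_sub_distrib]
  simp_rw [sub_mul]

end Comparison

theorem counting_functions_converge_uniformly_general {b : ℕ} (hb : 2 ≤ b) (ℓ : ℕ) (s : Set ℝ) :
    |(nuLb b ℓ).real s - (nub b).real s| ≤ (3 / ((b : ℝ) + 2)) ^ ℓ := by
  have hb₁ : 1 ≤ b := by omega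
  have hcard (m : ℕ) := ncard_Pm_inter_le (b := b) (by omega) m s
  have hhead (m : ℕ) (hm : m ∈ Finset.range ℓ) : 0 ≤ nuLbWeight b ℓ m - nubWeight b m :=
    sub_nonneg.2 (nubWeight_le_nuLbWeight hb₁ (Finset.mem_range.1 hm))
  have htail := hasSum_nubWeight_add_mul hb ℓ
  rw [nuLb_real_sub_nub_real hb]
  refine abs_sub_le_of_nonneg_of_le ?_ ?_ ?_ ?_
  · exact Finset.sum_nonneg fun m hm => mul_nonneg (hhead m hm) (Nat.cast_nonneg _)
  · exact (Finset.sum_le_sum fun m hm => mul_le_mul_of_nonneg_left (hcard m) (hhead m hm)).trans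
      (sum_nuLbWeight_sub_nubWeight_mul_le b ℓ)
  · exact tsum_nonneg fun m => mul_nonneg (nubWeight_nonneg hb₁ _) (Nat.cast_nonneg _)
  · exact (((summable_nat_add_iff ℓ).2 (summable_nubWeight_mul_ncard hb s)).tsum_le_tsum
      (fun m => mul_le_mul_of_nonneg_left (hcard _) (nubWeight_nonneg hb₁ _))
      htail.summable).trans_eq htail.tsum_eq

/-- There is a constant `C` such that for every `ℓ ≥ 1` and every `x ∈ ℝ`,
`|N_{ℓ,b}(x) − N_b(x)| ≤ C·(3/(b+2))^ℓ`: the normalized eigenvalue counting functions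
converge uniformly to `N_b` at a geometric rate. -/
theorem counting_functions_converge_uniformly (b : ℕ) (hb : 2 ≤ b) :
    ∃ C : ℝ, ∀ ℓ : ℕ, 1 ≤ ℓ → ∀ x : ℝ,
      |NLb b ℓ x - Nb b x| ≤ C * (3 / ((b : ℝ) + 2)) ^ ℓ := by
  refine ⟨1, fun ℓ _ x => ?_⟩
  rw [one_mul]
  exact counting_functions_converge_uniformly_general hb ℓ (Iic x)
end

section
/- The set J_b is a compact subset of [0,2], it is disjoint from both level-one gap intervals E_1^0 and E_1^1, it is totally disconnected, and it has Lebesgue measure zero. -/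
open Set MeasureTheory

/-- `J_b`, the closure of `⋃_{m≥0} P_m`: the Julia set of `R_b`, which equals the
spectrum of the probabilistic Laplacian on the infinite bubble-diamond graph. -/
noncomputable def Jb (b : ℕ) : Set ℝ := closure (⋃ m : ℕ, Pm b m)

/-!
In the coordinate `u = (b + 1) (z - 1)` the map `R_b` is the odd cubic
`g u = (u ^ 3 - (b ^ 2 + b + 1) u) / b`. Points outside `[-(b + 1), b + 1]` never return, so `J_b`
lies in the set `K` of points whose orbit stays in this interval, and both gaps are sent outside it.

To see that `K` is null, let `M = K ∩ [-1, 1]`. Every point of `K` has the same image as exactly one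
`u` in `M`, and the three preimages of `g u` sum to zero. Hence, as `u` runs through `M`, the outer
preimages sweep out a set whose measure is at most that of `M`, and `|K| ≤ 2 |M|`. On the other hand
`g` maps `M` injectively into `K` and `|g'| > 2` on `(-1, 1)`, so `|K| > 2 |M|` unless `M` is
null.
-/

section SurvivorSet

variable {α : Type*} {f : α → α} {s t : Set α} {x : α}

/-- The points whose whole forward orbit under `f` stays in `s`. When every orbit that leaves `s`
escapes for good, this is the filled Julia set of `f`. -/
def survivorSet (f : α → α) (s : Set α) : Set α := {x | ∀ n : ℕ, f^[n] x ∈ s}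

lemma survivorSet_subset (f : α → α) (s : Set α) : survivorSet f s ⊆ s := fun _ hx => hx 0

lemma isClosed_survivorSet [TopologicalSpace α] (hf : Continuous f) (hs : IsClosed s) :
    IsClosed (survivorSet f s) := by
  simp only [survivorSet, ofPred_forall]
  exact isClosed_iInter fun n => hs.preimage (hf.iterate n)

lemma subset_survivorSet_of_mapsTo (hf : MapsTo f t t) (hts : t ⊆ s) : t ⊆ survivorSet f s :=
  fun _ hx n => hts (hf.iterate n hx)

lemma apply_mem_survivorSet_iff (hf : MapsTo f sᶜ sᶜ) :
    f x ∈ survivorSet f s ↔ x ∈ survivorSet f s := by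
  refine ⟨fun hx n => ?_, fun hx n => hx (n + 1)⟩
  cases n with
  | zero => exact not_imp_not.1 (@hf x) (hx 0)
  | succ n => exact hx n

lemma iterate_mem_survivorSet_iff (hf : MapsTo f sᶜ sᶜ) (m : ℕ) :
    f^[m] x ∈ survivorSet f s ↔ x ∈ survivorSet f s := by
  induction m with
  | zero => rfl
  | succ m ih => rw [Function.iterate_succ_apply', apply_mem_survivorSet_iff hf, ih]

end SurvivorSet

lemma isTotallyDisconnected_of_measure_zero {α : Type*} [ConditionallyCompleteLinearOrder α]
    [TopologicalSpace α] [OrderTopology α] [DenselyOrdered α] [MeasurableSpace α] {μ : Measure α}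
    [μ.IsOpenPosMeasure] {s : Set α} (hs : μ s = 0) : IsTotallyDisconnected s := by
  refine isTotallyDisconnected_iff_lt.2 fun x _ y _ hxy => ?_
  by_contra! h
  have hsub : Ioo x y ⊆ s := fun z hz => by_contra fun hzs => h z hzs hz
  exact (isOpen_Ioo.measure_pos μ (nonempty_Ioo.2 hxy)).ne' (measure_mono_null hsub hs)

section Derivative

variable {f f' : ℝ → ℝ} {s : Set ℝ}

lemma volume_image_le_lintegral_abs_deriv (hs : MeasurableSet s)
    (hf' : ∀ x ∈ s, HasDerivWithinAt f (f' x) s x) :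
    volume (f '' s) ≤ ∫⁻ x in s, ENNReal.ofReal |f' x| := by
  simpa only [ContinuousLinearMap.det_toSpanSingleton] using
    addHaar_image_le_lintegral_abs_det_fderiv volume hs fun x hx => (hf' x hx).hasFDerivWithinAt

lemma lintegral_abs_deriv_eq_volume_image (hs : MeasurableSet s)
    (hf' : ∀ x ∈ s, HasDerivWithinAt f (f' x) s x) (hf : InjOn f s) :
    ∫⁻ x in s, ENNReal.ofReal |f' x| = volume (f '' s) := by
  simpa only [ContinuousLinearMap.det_toSpanSingleton] using
    lintegral_abs_det_fderiv_eq_addHaar_image volume hs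
      (fun x hx => (hf' x hx).hasFDerivWithinAt) hf

end Derivative

section CenteredCubic

variable {b u v : ℝ}

/-- The odd cubic to which `Rb b` is conjugate under the affine change of variable
`u = (b + 1) (z - 1)`, which carries `[0, 2]` to `[-(b + 1), b + 1]`. -/
noncomputable def centeredCubic (b u : ℝ) : ℝ := (u ^ 3 - (b ^ 2 + b + 1) * u) / b

lemma continuous_centeredCubic (b : ℝ) : Continuous (centeredCubic b) := by
  unfold centeredCubic
  fun_prop

lemma hasDerivAt_centeredCubic (b u : ℝ) :
    HasDerivAt (centeredCubic b) ((3 * u ^ 2 - (b ^ 2 + b + 1)) / b) u := by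
  have h := (((hasDerivAt_id' u).pow 3).sub
    ((hasDerivAt_id' u).const_mul (b ^ 2 + b + 1))).div_const b
  rw [mul_one, mul_one] at h
  exact h

lemma sq_centeredCubic_sub_sq (hb : b ≠ 0) (u : ℝ) :
    b ^ 2 * (centeredCubic b u ^ 2 - (b + 1) ^ 2) =
      (u ^ 2 - 1) * (u ^ 2 - b ^ 2) * (u ^ 2 - (b + 1) ^ 2) := by
  unfold centeredCubic
  field_simp
  ring

lemma centeredCubic_eq_iff (hb : b ≠ 0) :
    centeredCubic b u = centeredCubic b v ↔ u = v ∨ u ^ 2 + u * v + v ^ 2 = b ^ 2 + b + 1 := by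
  have factored : centeredCubic b u - centeredCubic b v =
      (u - v) * (u ^ 2 + u * v + v ^ 2 - (b ^ 2 + b + 1)) / b := by
    unfold centeredCubic
    ring
  rw [← sub_eq_zero, factored, div_eq_zero_iff, or_iff_left hb, mul_eq_zero, sub_eq_zero,
    sub_eq_zero]

lemma lt_abs_centeredCubic_iff (hb : 0 < b) :
    b + 1 < |centeredCubic b u| ↔
      0 < (u ^ 2 - 1) * (u ^ 2 - b ^ 2) * (u ^ 2 - (b + 1) ^ 2) := by
  rw [← sq_centeredCubic_sub_sq hb.ne', mul_pos_iff_of_pos_left (by positivity), sub_pos,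
    sq_lt_sq, abs_of_pos (by positivity : 0 < b + 1)]

lemma lt_abs_centeredCubic_of_gap (hb : 0 < b) (h1 : 1 < |u|) (h2 : |u| < b) :
    b + 1 < |centeredCubic b u| := by
  have hu1 : 1 < u ^ 2 := (one_lt_sq_iff_one_lt_abs u).2 h1
  have hub : u ^ 2 < b ^ 2 := sq_lt_sq.2 (by rwa [abs_of_pos hb])
  refine (lt_abs_centeredCubic_iff hb).2 (mul_pos_of_neg_of_neg ?_ (by linarith))
  exact mul_neg_of_pos_of_neg (by linarith) (by linarith)

lemma lt_abs_centeredCubic_of_lt_abs (hb : 0 < b) (h : b + 1 < |u|) :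
    b + 1 < |centeredCubic b u| := by
  have hu : (b + 1) ^ 2 < u ^ 2 := sq_lt_sq.2 (by rwa [abs_of_pos (by positivity)])
  exact (lt_abs_centeredCubic_iff hb).2
    (mul_pos (mul_pos (by nlinarith) (by nlinarith)) (by linarith))

lemma abs_centeredCubic_eq (hb : 0 < b) (hu : |u| = b ∨ |u| = b + 1) :
    |centeredCubic b u| = b + 1 := by
  have hprod : (u ^ 2 - 1) * (u ^ 2 - b ^ 2) * (u ^ 2 - (b + 1) ^ 2) = 0 := by
    rcases hu with hu | hu <;> rw [← sq_abs u, hu] <;> ring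
  rw [← sq_centeredCubic_sub_sq hb.ne', mul_eq_zero_iff_left (by positivity), sub_eq_zero,
    sq_eq_sq_iff_abs_eq_abs, abs_of_pos (by positivity : 0 < b + 1)] at hprod
  exact hprod

lemma injOn_centeredCubic (hb : 1 < b) : InjOn (centeredCubic b) (Icc (-1) 1) := by
  rintro u ⟨hu1, hu2⟩ v ⟨hv1, hv2⟩ huv
  refine ((centeredCubic_eq_iff (by positivity)).1 huv).resolve_right fun h => ?_
  nlinarith [sq_nonneg (u - v)]

lemma exists_mem_Icc_centeredCubic_eq (hb : b ≠ 0) {y : ℝ} (hy : y ∈ Icc (-(b + 1)) (b + 1)) :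
    ∃ u ∈ Icc (-1 : ℝ) 1, centeredCubic b u = y := by
  have map_neg_one : centeredCubic b (-1) = b + 1 := by
    unfold centeredCubic
    field_simp
    ring
  have map_one : centeredCubic b 1 = -(b + 1) := by
    unfold centeredCubic
    field_simp
    ring
  have image := intermediate_value_Icc' (by norm_num : (-1 : ℝ) ≤ 1)
    (continuous_centeredCubic b).continuousOn
  rw [map_neg_one, map_one] at image
  exact image hy

lemma two_lt_abs_deriv_centeredCubic (hb : 2 ≤ b) (hu : |u| < 1) :
    2 < |deriv (centeredCubic b) u| := by
  have hu2 : u ^ 2 < 1 := (sq_lt_one_iff_abs_lt_one u).2 hu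
  have hb0 : 0 < b := by linarith
  rw [(hasDerivAt_centeredCubic b u).deriv, lt_abs, ← neg_div, lt_div_iff₀ hb0, lt_div_iff₀ hb0]
  right
  nlinarith

end CenteredCubic

section OtherRoot

variable {b u v : ℝ}

/-- For `σ = 1` and `σ = -1`, the two roots of `X ^ 2 + u * X + u ^ 2 = b ^ 2 + b + 1`, that is,
the points other than `u` where `centeredCubic b` takes the value `centeredCubic b u`. -/
noncomputable def otherRoot (b σ u : ℝ) : ℝ := (σ * √(4 * (b ^ 2 + b + 1) - 3 * u ^ 2) - u) / 2

lemma eq_otherRoot_of_quadratic (h : u ^ 2 + u * v + v ^ 2 = b ^ 2 + b + 1) :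
    v = otherRoot b 1 u ∨ v = otherRoot b (-1) u := by
  have discriminant : 4 * (b ^ 2 + b + 1) - 3 * u ^ 2 = (u + 2 * v) ^ 2 := by
    linear_combination -4 * h
  unfold otherRoot
  rw [discriminant, Real.sqrt_sq_eq_abs]
  rcases abs_choice (u + 2 * v) with habs | habs <;> rw [habs]
  · left; ring
  · right; ring

lemma hasDerivAt_otherRoot (σ : ℝ) (hu : 3 * u ^ 2 < 4 * (b ^ 2 + b + 1)) :
    HasDerivAt (otherRoot b σ)
      (-(1 + σ * (3 * u / √(4 * (b ^ 2 + b + 1) - 3 * u ^ 2))) / 2) u := by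
  have inner : HasDerivAt (fun x : ℝ => 4 * (b ^ 2 + b + 1) - 3 * x ^ 2) (-(3 * (2 * u))) u := by
    simpa using ((hasDerivAt_pow 2 u).const_mul 3).const_sub (4 * (b ^ 2 + b + 1))
  have h := (((inner.sqrt (by linarith)).const_mul σ).sub (hasDerivAt_id' u)).div_const 2
  refine h.congr_deriv ?_
  ring

/-- The three preimages of a point under `centeredCubic b` sum to zero and the outer two both move
against the middle one, so together they move exactly as far as it does. -/
lemma abs_deriv_otherRoot_add (hu : 3 * u ^ 2 ≤ b ^ 2 + b + 1) :
    |deriv (otherRoot b 1) u| + |deriv (otherRoot b (-1)) u| = 1 := by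
  have hlt : 3 * u ^ 2 < 4 * (b ^ 2 + b + 1) := by nlinarith [sq_nonneg (b + 1)]
  have hratio : |3 * u / √(4 * (b ^ 2 + b + 1) - 3 * u ^ 2)| ≤ 1 := by
    rw [abs_div, abs_of_nonneg (Real.sqrt_nonneg _)]
    exact div_le_one_of_le₀ (Real.abs_le_sqrt (by linarith)) (Real.sqrt_nonneg _)
  rw [abs_le] at hratio
  rw [(hasDerivAt_otherRoot 1 hlt).deriv, (hasDerivAt_otherRoot (-1) hlt).deriv,
    abs_of_nonpos (by linarith), abs_of_nonpos (by linarith)]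
  ring

end OtherRoot

section FilledJulia

variable {b u : ℝ}

/-- The filled Julia set of `centeredCubic b` on the real line. -/
def filledJulia (b : ℝ) : Set ℝ :=
  survivorSet (centeredCubic b) (Icc (-(b + 1)) (b + 1))

/-- The part of `filledJulia b` in the central one of the three intervals `[-(b + 1), -b]`,
`[-1, 1]` and `[b, b + 1]` that `centeredCubic b` maps onto `[-(b + 1), b + 1]`. -/
def middlePiece (b : ℝ) : Set ℝ := filledJulia b ∩ Icc (-1) 1

lemma isClosed_filledJulia (b : ℝ) : IsClosed (filledJulia b) :=
  isClosed_survivorSet (continuous_centeredCubic b) isClosed_Icc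

lemma measurableSet_middlePiece (b : ℝ) : MeasurableSet (middlePiece b) :=
  ((isClosed_filledJulia b).inter isClosed_Icc).measurableSet

lemma mapsTo_centeredCubic_compl (hb : 0 < b) :
    MapsTo (centeredCubic b) (Icc (-(b + 1)) (b + 1))ᶜ (Icc (-(b + 1)) (b + 1))ᶜ := by
  intro u hu
  rw [mem_compl_iff, mem_Icc, ← abs_le, not_le] at hu ⊢
  exact lt_abs_centeredCubic_of_lt_abs hb hu

lemma centeredCubic_mem_filledJulia_iff (hb : 0 < b) :
    centeredCubic b u ∈ filledJulia b ↔ u ∈ filledJulia b :=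
  apply_mem_survivorSet_iff (mapsTo_centeredCubic_compl hb)

lemma notMem_filledJulia_of_gap (hb : 0 < b) (h1 : 1 < |u|) (h2 : |u| < b) :
    u ∉ filledJulia b := fun hu =>
  (lt_abs_centeredCubic_of_gap hb h1 h2).not_ge (abs_le.2 (hu 1))

lemma mem_filledJulia_of_abs_eq (hb : 0 < b) (hu : |u| = b) : u ∈ filledJulia b := by
  have endpoints : {x : ℝ | |x| = b + 1} ⊆ filledJulia b :=
    subset_survivorSet_of_mapsTo (fun _ hx => abs_centeredCubic_eq hb (Or.inr hx))
      fun _ hx => abs_le.1 (le_of_eq hx)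
  exact (centeredCubic_mem_filledJulia_iff hb).1 (endpoints (abs_centeredCubic_eq hb (Or.inl hu)))

lemma filledJulia_subset_union_otherRoot (hb : 0 < b) :
    filledJulia b ⊆
      middlePiece b ∪ (otherRoot b 1 '' middlePiece b ∪ otherRoot b (-1) '' middlePiece b) := by
  intro v hv
  have hgv : centeredCubic b v ∈ filledJulia b := (centeredCubic_mem_filledJulia_iff hb).2 hv
  obtain ⟨u, hu, huv⟩ := exists_mem_Icc_centeredCubic_eq hb.ne' (survivorSet_subset _ _ hgv)
  have hmid : u ∈ middlePiece b := ⟨(centeredCubic_mem_filledJulia_iff hb).1 (huv ▸ hgv), hu⟩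
  rcases (centeredCubic_eq_iff hb.ne').1 huv with rfl | hquad
  · exact Or.inl hmid
  · rcases eq_otherRoot_of_quadratic hquad with rfl | rfl
    · exact Or.inr (Or.inl (mem_image_of_mem _ hmid))
    · exact Or.inr (Or.inr (mem_image_of_mem _ hmid))

lemma volume_image_otherRoot_add_le (hb : 1 ≤ b) :
    volume (otherRoot b 1 '' middlePiece b) + volume (otherRoot b (-1) '' middlePiece b) ≤
      volume (middlePiece b) := by
  have bound {u : ℝ} (hu : u ∈ middlePiece b) : 3 * u ^ 2 ≤ b ^ 2 + b + 1 := by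
    nlinarith [hu.2.1, hu.2.2]
  have image_le (σ : ℝ) : volume (otherRoot b σ '' middlePiece b) ≤
      ∫⁻ u in middlePiece b, ENNReal.ofReal |deriv (otherRoot b σ) u| :=
    volume_image_le_lintegral_abs_deriv (measurableSet_middlePiece b) fun u hu =>
      (hasDerivAt_otherRoot σ (by nlinarith [bound hu])).differentiableAt.hasDerivAt
        |>.hasDerivWithinAt
  calc volume (otherRoot b 1 '' middlePiece b) + volume (otherRoot b (-1) '' middlePiece b)
      ≤ (∫⁻ u in middlePiece b, ENNReal.ofReal |deriv (otherRoot b 1) u|) +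
          ∫⁻ u in middlePiece b, ENNReal.ofReal |deriv (otherRoot b (-1)) u| :=
        add_le_add (image_le 1) (image_le (-1))
    _ = ∫⁻ u in middlePiece b, (ENNReal.ofReal |deriv (otherRoot b 1) u| +
          ENNReal.ofReal |deriv (otherRoot b (-1)) u|) :=
        (lintegral_add_left (measurable_deriv _).abs.ennreal_ofReal _).symm
    _ = ∫⁻ _ in middlePiece b, 1 := by
        refine setLIntegral_congr_fun (measurableSet_middlePiece b) fun u hu => ?_
        rw [← ENNReal.ofReal_add (abs_nonneg _) (abs_nonneg _),
          abs_deriv_otherRoot_add (bound hu), ENNReal.ofReal_one]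
    _ = volume (middlePiece b) := setLIntegral_one _

lemma volume_filledJulia_le (hb : 1 ≤ b) :
    volume (filledJulia b) ≤ 2 * volume (middlePiece b) := by
  calc volume (filledJulia b)
      ≤ volume (middlePiece b) +
          (volume (otherRoot b 1 '' middlePiece b) + volume (otherRoot b (-1) '' middlePiece b)) :=
        (measure_mono (filledJulia_subset_union_otherRoot (by linarith))).trans <|
          (measure_union_le _ _).trans (add_le_add_right (measure_union_le _ _) _)
    _ ≤ volume (middlePiece b) + volume (middlePiece b) :=
        add_le_add_right (volume_image_otherRoot_add_le hb) _
    _ = 2 * volume (middlePiece b) := (two_mul _).symm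

lemma ae_two_lt_abs_deriv_of_mem_middlePiece (hb : 2 ≤ b) :
    ∀ᵐ u : ℝ, u ∈ middlePiece b → 2 < ENNReal.ofReal |deriv (centeredCubic b) u| := by
  filter_upwards [(toFinite ({-1, 1} : Set ℝ)).countable.ae_notMem volume] with u hne hu
  rw [mem_insert_iff, mem_singleton_iff, not_or] at hne
  have hu1 : |u| < 1 := abs_lt.2 ⟨hu.2.1.lt_of_ne' hne.1, hu.2.2.lt_of_ne hne.2⟩
  rw [← ENNReal.ofReal_ofNat, ENNReal.ofReal_lt_ofReal_iff_of_nonneg zero_le_two]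
  exact two_lt_abs_deriv_centeredCubic hb hu1

lemma volume_middlePiece_eq_zero (hb : 2 ≤ b) : volume (middlePiece b) = 0 := by
  by_contra hpos
  have finite : ∫⁻ _ in middlePiece b, 2 ≠ ⊤ := by
    rw [setLIntegral_const]
    exact ENNReal.mul_ne_top ENNReal.ofNat_ne_top
      (measure_ne_top_of_subset inter_subset_right measure_Icc_lt_top.ne)
  have image_subset : centeredCubic b '' middlePiece b ⊆ filledJulia b := by
    rintro _ ⟨u, hu, rfl⟩
    exact (centeredCubic_mem_filledJulia_iff (by linarith)).2 hu.1
  refine lt_irrefl (2 * volume (middlePiece b)) ?_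
  calc 2 * volume (middlePiece b)
      = ∫⁻ _ in middlePiece b, 2 := (setLIntegral_const _ _).symm
    _ < ∫⁻ u in middlePiece b, ENNReal.ofReal |deriv (centeredCubic b) u| :=
        setLIntegral_strict_mono (measurableSet_middlePiece b) hpos
          (measurable_deriv _).abs.ennreal_ofReal finite
          (ae_two_lt_abs_deriv_of_mem_middlePiece hb)
    _ = volume (centeredCubic b '' middlePiece b) :=
        lintegral_abs_deriv_eq_volume_image (measurableSet_middlePiece b)
          (fun u _ => (hasDerivAt_centeredCubic b u).differentiableAt.hasDerivAt.hasDerivWithinAt)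
          ((injOn_centeredCubic (by linarith)).mono inter_subset_right)
    _ ≤ volume (filledJulia b) := measure_mono image_subset
    _ ≤ 2 * volume (middlePiece b) := volume_filledJulia_le (by linarith)

lemma volume_filledJulia_eq_zero (hb : 2 ≤ b) : volume (filledJulia b) = 0 := by
  simpa [volume_middlePiece_eq_zero hb] using volume_filledJulia_le (by linarith : 1 ≤ b)

end FilledJulia

section SpectralDecimation

variable {b : ℕ} {z : ℝ}

/-- The affine change of variable that moves the centre of symmetry `1` of `Rb b` to `0`. -/
def centering (b : ℕ) (z : ℝ) : ℝ := ((b : ℝ) + 1) * (z - 1)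

lemma continuous_centering (b : ℕ) : Continuous (centering b) := by
  unfold centering
  fun_prop

lemma semiconj_centering (hb : b ≠ 0) :
    Function.Semiconj (centering b) (Rb b) (centeredCubic b) := by
  intro z
  unfold centering Rb centeredCubic
  field_simp
  ring

lemma abs_centering_eq_of_mem_Eb (hz : z ∈ Eb b) : |centering b z| = b := by
  have hb : (b : ℝ) + 1 ≠ 0 := by positivity
  rcases hz with rfl | rfl
  · have : centering b (1 / ((b : ℝ) + 1)) = -b := by
      unfold centering
      field_simp
      ring
    rw [this, abs_neg, Nat.abs_cast]
  · have : centering b ((2 * (b : ℝ) + 1) / ((b : ℝ) + 1)) = b := by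
      unfold centering
      field_simp
      ring
    rw [this, Nat.abs_cast]

lemma Pm_subset_preimage_filledJulia (hb : b ≠ 0) (m : ℕ) :
    Pm b m ⊆ centering b ⁻¹' filledJulia b := by
  have hb0 : (0 : ℝ) < b := by positivity
  intro z hz
  refine (iterate_mem_survivorSet_iff (mapsTo_centeredCubic_compl hb0) m).1 ?_
  rw [← (semiconj_centering hb).iterate_right m z]
  exact mem_filledJulia_of_abs_eq hb0 (abs_centering_eq_of_mem_Eb hz)

lemma Jb_subset_preimage_filledJulia (hb : b ≠ 0) : Jb b ⊆ centering b ⁻¹' filledJulia b :=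
  closure_minimal (iUnion_subset (Pm_subset_preimage_filledJulia hb))
    ((isClosed_filledJulia b).preimage (continuous_centering b))

lemma Jb_subset_Icc (hb : b ≠ 0) : Jb b ⊆ Icc 0 2 := by
  intro z hz
  have hb1 : (0 : ℝ) < b + 1 := by positivity
  have hcentering : centering b z ∈ Icc (-((b : ℝ) + 1)) (b + 1) :=
    survivorSet_subset _ _ (Jb_subset_preimage_filledJulia hb hz)
  rw [mem_Icc, ← abs_le, centering, abs_mul, abs_of_pos hb1, mul_le_iff_le_one_right hb1,
    abs_le] at hcentering
  exact ⟨by linarith, by linarith⟩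

lemma isCompact_Jb (hb : b ≠ 0) : IsCompact (Jb b) :=
  isCompact_Icc.of_isClosed_subset isClosed_closure (Jb_subset_Icc hb)

lemma disjoint_Jb_of_abs_centering {s : Set ℝ} (hb : b ≠ 0)
    (hs : ∀ z ∈ s, 1 < |centering b z| ∧ |centering b z| < b) : Disjoint (Jb b) s :=
  disjoint_left.2 fun z hz hzs => notMem_filledJulia_of_gap (by positivity) (hs z hzs).1
    (hs z hzs).2 (Jb_subset_preimage_filledJulia hb hz)

lemma disjoint_Jb_left_gap (hb : b ≠ 0) :
    Disjoint (Jb b) (Ioo (1 / ((b : ℝ) + 1)) ((b : ℝ) / ((b : ℝ) + 1))) := by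
  refine disjoint_Jb_of_abs_centering hb fun z ⟨hleft, hright⟩ => ?_
  rw [div_lt_iff₀ (by positivity)] at hleft
  rw [lt_div_iff₀ (by positivity)] at hright
  unfold centering
  rw [abs_of_neg (by linarith)]
  exact ⟨by linarith, by linarith⟩

lemma disjoint_Jb_right_gap (hb : b ≠ 0) :
    Disjoint (Jb b)
      (Ioo (((b : ℝ) + 2) / ((b : ℝ) + 1)) ((2 * (b : ℝ) + 1) / ((b : ℝ) + 1))) := by
  refine disjoint_Jb_of_abs_centering hb fun z ⟨hleft, hright⟩ => ?_
  rw [div_lt_iff₀ (by positivity)] at hleft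
  rw [lt_div_iff₀ (by positivity)] at hright
  unfold centering
  rw [abs_of_pos (by linarith)]
  exact ⟨by linarith, by linarith⟩

lemma volume_preimage_centering (b : ℕ) (s : Set ℝ) :
    volume (centering b ⁻¹' s) = ENNReal.ofReal |((b : ℝ) + 1)⁻¹| * volume s := by
  have hb : (b : ℝ) + 1 ≠ 0 := by positivity
  rw [← Real.volume_preimage_mul_left hb s]
  exact measure_preimage_add_right volume (-1) ((((b : ℝ) + 1) * ·) ⁻¹' s)

lemma volume_Jb_eq_zero (hb : 2 ≤ b) : volume (Jb b) = 0 := by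
  refine measure_mono_null (Jb_subset_preimage_filledJulia (by lia)) ?_
  rw [volume_preimage_centering, volume_filledJulia_eq_zero (by exact_mod_cast hb), mul_zero]

end SpectralDecimation

/-- `J_b` is a compact subset of `[0,2]`, disjoint from both level-one gap intervals
`E₁⁰ = (1/(b+1), b/(b+1))` and `E₁¹ = ((b+2)/(b+1), (2b+1)/(b+1))`, totally
disconnected, and of Lebesgue measure zero. -/
theorem Julia_set_structure (b : ℕ) (hb : 2 ≤ b) :
    IsCompact (Jb b) ∧
    Jb b ⊆ Icc (0 : ℝ) 2 ∧
    Disjoint (Jb b) (Ioo (1 / ((b : ℝ) + 1)) ((b : ℝ) / ((b : ℝ) + 1))) ∧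
    Disjoint (Jb b)
      (Ioo (((b : ℝ) + 2) / ((b : ℝ) + 1)) ((2 * (b : ℝ) + 1) / ((b : ℝ) + 1))) ∧
    IsTotallyDisconnected (Jb b) ∧
    volume (Jb b) = 0 := by
  have hb0 : b ≠ 0 := by lia
  exact ⟨isCompact_Jb hb0, Jb_subset_Icc hb0, disjoint_Jb_left_gap hb0, disjoint_Jb_right_gap hb0,
    isTotallyDisconnected_of_measure_zero (volume_Jb_eq_zero hb), volume_Jb_eq_zero hb⟩
end

section
/- The set of values taken by the integrated density of states on the gaps of the spectrum equals the gap label set: {N_b(x) : x ∈ (0,2) \ J_b} = G_b. -/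
open Set MeasureTheory

/-- The gap label set
`G_b = {(b+1+2w_k)/(2(b+2)^k) + ((b+1)/2)·Σ_{j=1}^{k−1} w_j/(b+2)^j}` over all `k ≥ 1`,
`w_1,…,w_{k−1} ∈ {0,1,2}`, `w_k ∈ {0,1}`. -/
noncomputable def Gb (b : ℕ) : Set ℝ :=
  {y : ℝ | ∃ (k : ℕ) (w : ℕ → ℕ), 1 ≤ k ∧
    (∀ j : ℕ, 1 ≤ j → j ≤ k - 1 → w j ∈ ({0, 1, 2} : Set ℕ)) ∧
    w k ∈ ({0, 1} : Set ℕ) ∧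
    y = ((b : ℝ) + 1 + 2 * (w k : ℝ)) / (2 * ((b : ℝ) + 2) ^ k) +
      (((b : ℝ) + 1) / 2) * ∑ j ∈ Finset.Icc 1 (k - 1), (w j : ℝ) / ((b : ℝ) + 2) ^ j}

/-! `R_b` maps each of three disjoint intervals (branches) monotonically onto `[0, 2]` and sends
the two gaps between them outside `[0, 2]`, never to return. Its Julia set therefore consists of
the points whose orbit stays in `[0, 2]`, and every other point of `[0, 2]` follows a finite
itinerary through the branches before it reaches one of the two central gaps. Reflecting the
decreasing middle branch makes all three branch maps increasing; they carry the level sets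
`P_{m+1}` to `P_m`, so `ν_b` is self-similar with factor `1/(b+2)`. Consequently `N_b` equals
`(b+1+2e)/(2(b+2))` on the central gap `e` and `((b+1)/2 · w + N_b(T_w x))/(b+2)` on the branch
`w` with branch map `T_w`. Unrolling this recursion turns the itinerary of a point into the digits
of its gap label. -/

namespace BubbleDiamond

lemma sum_dirac_coe_apply {α : Type*} [MeasurableSpace α] (S : Set α) {A : Set α}
    (hA : MeasurableSet A) :
    Measure.sum (fun s : S => Measure.dirac (s : α)) A = ((S ∩ A).encard : ENNReal) := by
  rw [Measure.sum_apply _ hA]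
  simp_rw [Measure.dirac_apply' _ hA]
  rw [tsum_subtype S (A.indicator 1), indicator_indicator, ← ENNReal.tsum_set_one]
  exact (tsum_subtype (S ∩ A) 1).symm

section Dynamics

variable {X : Type*}

/-- The points whose forward orbit under `f` never leaves `S`. -/
def nonescaping (f : X → X) (S : Set X) : Set X := {x | ∀ n, f^[n] x ∈ S}

lemma isClosed_nonescaping [TopologicalSpace X] {f : X → X} {S : Set X} (hf : Continuous f)
    (hS : IsClosed S) : IsClosed (nonescaping f S) := by
  simp only [nonescaping, ofPred_forall]
  exact isClosed_iInter fun n => hS.preimage (hf.iterate n)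

lemma apply_mem_nonescaping_iff {f : X → X} {S : Set X} (hfS : f ⁻¹' S ⊆ S) {x : X} :
    f x ∈ nonescaping f S ↔ x ∈ nonescaping f S := by
  refine ⟨fun h n => ?_, fun h n => h (n + 1)⟩
  cases n with
  | zero => exact hfS (h 0)
  | succ n => exact h n

lemma subset_closure_iUnion_of_contracting_lift [PseudoMetricSpace X] {K : Set X}
    {P : ℕ → Set X} {r C : ℝ} (hr₀ : 0 ≤ r) (hr₁ : r < 1)
    (hbase : ∀ x ∈ K, ∃ p ∈ P 0, dist x p ≤ C)
    (hlift : ∀ n, ∀ x ∈ K, ∃ y ∈ K, ∀ p ∈ P n, ∃ q ∈ P (n + 1), dist x q ≤ r * dist y p) :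
    K ⊆ closure (⋃ n, P n) := by
  have happrox : ∀ n, ∀ x ∈ K, ∃ p ∈ P n, dist x p ≤ C * r ^ n := by
    intro n
    induction n with
    | zero => simpa using hbase
    | succ n ih =>
      intro x hx
      obtain ⟨y, hy, hxy⟩ := hlift n x hx
      obtain ⟨p, hp, hyp⟩ := ih y hy
      obtain ⟨q, hq, hxq⟩ := hxy p hp
      refine ⟨q, hq, hxq.trans ?_⟩
      calc r * dist y p ≤ r * (C * r ^ n) := by gcongr
        _ = C * r ^ (n + 1) := by ring
  have hlim : Filter.Tendsto (fun n => C * r ^ n) Filter.atTop (nhds 0) := by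
    simpa using (tendsto_pow_atTop_nhds_zero_of_lt_one hr₀ hr₁).const_mul C
  intro x hx
  refine Metric.mem_closure_iff.2 fun ε hε => ?_
  obtain ⟨n, hn⟩ := (hlim.eventually_lt_const hε).exists
  obtain ⟨p, hp, hxp⟩ := happrox n x hx
  exact ⟨p, mem_iUnion.2 ⟨n, hp⟩, hxp.trans_lt hn⟩

end Dynamics

section Decimation

variable {b : ℕ} {w : Fin 3} {e : Fin 2} {x y : ℝ}

/-- Left endpoint of the `w`-th branch interval of `R_b`. -/
noncomputable def branchLeft (b : ℕ) (w : Fin 3) : ℝ := ![0, (b : ℝ), 2 * b + 1] w / (b + 1)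

/-- Right endpoint of the `w`-th branch interval of `R_b`. -/
noncomputable def branchRight (b : ℕ) (w : Fin 3) : ℝ := ![1, (b : ℝ) + 2, 2 * b + 2] w / (b + 1)

/-- The three intervals, numbered from left to right, each of which `R_b` maps bijectively onto
`[0, 2]`. -/
def branch (b : ℕ) (w : Fin 3) : Set ℝ := Icc (branchLeft b w) (branchRight b w)

/-- The two bounded gaps between consecutive branch intervals. -/
def gap (b : ℕ) (e : Fin 2) : Set ℝ := Ioo (branchRight b e.castSucc) (branchLeft b e.succ)

/-- The map `R_b` on the `w`-th branch, composed with the reflection `x ↦ 2 - x` on the middle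
branch, where `R_b` is decreasing. Thus all three branch maps are increasing. -/
noncomputable def branchMap (b : ℕ) : Fin 3 → ℝ → ℝ := ![Rb b, fun x => 2 - Rb b x, Rb b]

lemma mem_branch_iff : x ∈ branch b w ↔
    ![0, (b : ℝ), 2 * b + 1] w ≤ (b + 1) * x ∧ (b + 1) * x ≤ ![1, (b : ℝ) + 2, 2 * b + 2] w := by
  have hb : (0 : ℝ) < b + 1 := by positivity
  rw [branch, mem_Icc, branchLeft, branchRight, div_le_iff₀' hb, le_div_iff₀' hb]

lemma mem_gap_iff : x ∈ gap b e ↔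
    ![1, (b : ℝ) + 2] e < (b + 1) * x ∧ (b + 1) * x < ![(b : ℝ), 2 * b + 1] e := by
  have hb : (0 : ℝ) < b + 1 := by positivity
  rw [gap, mem_Ioo, branchLeft, branchRight, div_lt_iff₀' hb, lt_div_iff₀' hb]
  fin_cases e <;> rfl

lemma branchLeft_zero (b : ℕ) : branchLeft b 0 = 0 := by simp [branchLeft]

lemma branchRight_two (b : ℕ) : branchRight b 2 = 2 := by
  have : (b : ℝ) + 1 ≠ 0 := by positivity
  rw [branchRight, div_eq_iff this]
  exact (mul_add_one (2 : ℝ) b).symm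

lemma Eb_eq (b : ℕ) : Eb b = {branchRight b 0, branchLeft b 2} := rfl

lemma branchLeft_le_branchRight (b : ℕ) (w : Fin 3) : branchLeft b w ≤ branchRight b w := by
  unfold branchLeft branchRight
  gcongr
  fin_cases w <;> simp

lemma branchRight_lt_branchLeft (hb : 2 ≤ b) {v : Fin 3} (hvw : v < w) :
    branchRight b v < branchLeft b w := by
  have hb₂ : (2 : ℝ) ≤ b := mod_cast hb
  unfold branchLeft branchRight
  gcongr
  fin_cases v <;> fin_cases w <;> simp at hvw ⊢ <;> linarith

lemma strictMono_branchLeft (hb : 2 ≤ b) : StrictMono (branchLeft b) := fun v _ hvw =>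
  (branchLeft_le_branchRight b v).trans_lt (branchRight_lt_branchLeft hb hvw)

lemma strictMono_branchRight (hb : 2 ≤ b) : StrictMono (branchRight b) := fun _ w hvw =>
  (branchRight_lt_branchLeft hb hvw).trans_le (branchLeft_le_branchRight b w)

lemma branch_subset_Icc (b : ℕ) (w : Fin 3) : branch b w ⊆ Icc 0 2 := by
  rw [← branchLeft_zero b, ← branchRight_two b]
  unfold branch branchLeft branchRight
  refine Icc_subset_Icc ?_ ?_ <;> gcongr <;> fin_cases w <;> simp <;> linarith

lemma pairwise_disjoint_branch (hb : 2 ≤ b) : Pairwise (Function.onFun Disjoint (branch b)) :=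
  (pairwise_disjoint_on _).2 fun _ _ hvw => disjoint_left.2 fun _ hv hw =>
    (hv.2.trans_lt (branchRight_lt_branchLeft hb hvw)).not_ge hw.1

lemma exists_mem_branch_or_gap (hx : x ∈ Icc (0 : ℝ) 2) :
    (∃ w, x ∈ branch b w) ∨ ∃ e, x ∈ gap b e := by
  rw [← branchLeft_zero b, ← branchRight_two b] at hx
  rcases le_or_gt x (branchRight b 0) with h | h₁
  · exact .inl ⟨0, hx.1, h⟩
  rcases lt_or_ge x (branchLeft b 1) with h | h₂
  · exact .inr ⟨0, h₁, h⟩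
  rcases le_or_gt x (branchRight b 1) with h | h₃
  · exact .inl ⟨1, h₂, h⟩
  rcases lt_or_ge x (branchLeft b 2) with h | h₄
  · exact .inr ⟨1, h₃, h⟩
  · exact .inl ⟨2, h₄, hx.2⟩

lemma continuous_Rb (b : ℕ) : Continuous (Rb b) := by
  unfold Rb
  fun_prop

lemma Rb_two_sub (hb : b ≠ 0) (x : ℝ) : Rb b (2 - x) = 2 - Rb b x := by
  unfold Rb
  field_simp
  ring

-- In `u = (b + 1) * (x - 1)`, centred at the fixed point `1`, `R_b` is an odd cubic, which makes
-- the divided difference `u² + uv + v²` minus a constant.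
lemma Rb_sub_Rb (b : ℕ) (x y : ℝ) :
    Rb b y - Rb b x = (y - x) * ((((b + 1) * (y - 1)) ^ 2
      + ((b + 1) * (y - 1)) * ((b + 1) * (x - 1)) + ((b + 1) * (x - 1)) ^ 2
      - (b ^ 2 + b + 1)) / b) := by
  unfold Rb
  ring

lemma Rb_sub_two (hb : b ≠ 0) (x : ℝ) :
    Rb b x - 2 = (x - 2) * ((b + 1) * x - b) * ((b + 1) * x - 1) / b := by
  unfold Rb
  field_simp
  ring

lemma Rb_neg (hb : b ≠ 0) (hx : x < 0) : Rb b x < 0 := by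
  have hx' : (b + 1) * x < 0 := mul_neg_of_pos_of_neg (by positivity) hx
  have : x / b < 0 := div_neg_of_neg_of_pos hx (by positivity)
  have : (b + 1) * x - (2 * b + 1) < 0 := by linarith
  have : (b + 1) * x - (b + 2) < 0 := by linarith
  exact mul_neg_of_pos_of_neg (mul_pos_of_neg_of_neg ‹_› ‹_›) ‹_›

lemma two_lt_Rb_of_mem_gap_zero (hx : x ∈ gap b 0) : 2 < Rb b x := by
  obtain ⟨h₁, h₂⟩ : 1 < (b + 1) * x ∧ (b + 1) * x < b := mem_gap_iff.1 hx
  have hb : (0 : ℝ) < b := by linarith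
  have hx₂ : x - 2 < 0 := by nlinarith
  rw [← sub_pos, Rb_sub_two (by exact_mod_cast hb.ne')]
  exact div_pos (mul_pos (mul_pos_of_neg_of_neg hx₂ (by linarith)) (by linarith)) hb

lemma two_sub_mem_gap_zero (hx : x ∈ gap b 1) : 2 - x ∈ gap b 0 := by
  obtain ⟨h₁, h₂⟩ : b + 2 < (b + 1) * x ∧ (b + 1) * x < 2 * b + 1 := mem_gap_iff.1 hx
  exact mem_gap_iff.2 ⟨by simp; linarith, by simp; linarith⟩

lemma two_sub_mem_Icc_iff : 2 - x ∈ Icc (0 : ℝ) 2 ↔ x ∈ Icc (0 : ℝ) 2 := by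
  simp [and_comm]

lemma Rb_notMem_Icc_of_mem_gap (hb : b ≠ 0) (hx : x ∈ gap b e) : Rb b x ∉ Icc (0 : ℝ) 2 := by
  match e with
  | 0 => exact fun h => h.2.not_gt (two_lt_Rb_of_mem_gap_zero hx)
  | 1 =>
    rw [← two_sub_mem_Icc_iff, ← Rb_two_sub hb]
    exact fun h => h.2.not_gt (two_lt_Rb_of_mem_gap_zero (two_sub_mem_gap_zero hx))

lemma preimage_Rb_Icc_subset (hb : b ≠ 0) : Rb b ⁻¹' Icc 0 2 ⊆ Icc 0 2 := by
  refine fun x hx => ⟨not_lt.1 fun h => hx.1.not_gt (Rb_neg hb h), not_lt.1 fun h => ?_⟩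
  have := Rb_neg hb (sub_neg.2 h)
  rw [Rb_two_sub hb] at this
  exact hx.2.not_gt (sub_neg.1 this)

lemma exists_mem_branch_of_Rb_mem_Icc (hb : b ≠ 0) (hx : Rb b x ∈ Icc (0 : ℝ) 2) :
    ∃ w, x ∈ branch b w :=
  (exists_mem_branch_or_gap (preimage_Rb_Icc_subset hb hx)).resolve_right
    fun ⟨_, he⟩ => Rb_notMem_Icc_of_mem_gap hb he hx

lemma continuous_branchMap (b : ℕ) (w : Fin 3) : Continuous (branchMap b w) := by
  have := continuous_Rb b
  match w with
  | 0 | 2 => exact this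
  | 1 => exact continuous_const.sub this

lemma branchMap_branchLeft (hb : b ≠ 0) (w : Fin 3) : branchMap b w (branchLeft b w) = 0 := by
  fin_cases w <;> simp only [branchMap, branchLeft, Rb, Fin.reduceFinMk, Matrix.cons_val] <;>
    field_simp <;> ring

lemma branchMap_branchRight (hb : b ≠ 0) (w : Fin 3) : branchMap b w (branchRight b w) = 2 := by
  fin_cases w <;> simp only [branchMap, branchRight, Rb, Fin.reduceFinMk, Matrix.cons_val] <;>
    field_simp <;> ring

lemma two_mul_sub_le_Rb_sub_Rb_of_outer (hb : 2 ≤ b) (hx : b ≤ (b + 1) * (x - 1))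
    (hxy : x ≤ y) : 2 * (y - x) ≤ Rb b y - Rb b x := by
  have hb₂ : (2 : ℝ) ≤ b := mod_cast hb
  have hy : b ≤ (b + 1) * (y - 1) := hx.trans (by gcongr)
  rw [Rb_sub_Rb, mul_comm]
  refine mul_le_mul_of_nonneg_left ?_ (sub_nonneg.2 hxy)
  rw [le_div_iff₀ (by linarith)]
  nlinarith [mul_le_mul hx hx (by linarith) (by linarith),
    mul_le_mul hx hy (by linarith) (by linarith), mul_le_mul hy hy (by linarith) (by linarith)]

lemma two_mul_sub_le_Rb_sub_Rb_of_middle (hb : 2 ≤ b) (hx : |(b + 1) * (x - 1)| ≤ 1)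
    (hy : |(b + 1) * (y - 1)| ≤ 1) (hxy : x ≤ y) : 2 * (y - x) ≤ Rb b x - Rb b y := by
  have hb₂ : (2 : ℝ) ≤ b := mod_cast hb
  rw [← neg_sub (Rb b y), Rb_sub_Rb, mul_comm, ← mul_neg]
  refine mul_le_mul_of_nonneg_left ?_ (sub_nonneg.2 hxy)
  rw [le_neg, div_le_iff₀ (by linarith)]
  rw [← sq_le_one_iff_abs_le_one] at hx hy
  nlinarith [sq_nonneg ((b + 1) * (y - 1) - (b + 1) * (x - 1))]

lemma two_mul_sub_le_branchMap_sub (hb : 2 ≤ b) (hx : x ∈ branch b w) (hy : y ∈ branch b w)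
    (hxy : x ≤ y) : 2 * (y - x) ≤ branchMap b w y - branchMap b w x := by
  rw [mem_branch_iff] at hx hy
  match w with
  | 0 =>
    have hy' : (b + 1) * y ≤ 1 := hy.2
    have := two_mul_sub_le_Rb_sub_Rb_of_outer hb (x := 2 - y) (y := 2 - x) (by linarith)
      (by linarith)
    rw [Rb_two_sub (by omega), Rb_two_sub (by omega)] at this
    exact (by linarith : 2 * (y - x) ≤ Rb b y - Rb b x)
  | 1 =>
    obtain ⟨⟨hx₁, hx₂⟩, hy₁, hy₂⟩ : (b ≤ (b + 1) * x ∧ (b + 1) * x ≤ b + 2) ∧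
      b ≤ (b + 1) * y ∧ (b + 1) * y ≤ b + 2 := ⟨hx, hy⟩
    have := two_mul_sub_le_Rb_sub_Rb_of_middle hb (abs_le.2 ⟨by linarith, by linarith⟩)
      (abs_le.2 ⟨by linarith, by linarith⟩) hxy
    exact (by linarith : 2 * (y - x) ≤ (2 - Rb b y) - (2 - Rb b x))
  | 2 =>
    have hx' : 2 * b + 1 ≤ (b + 1) * x := hx.1
    exact two_mul_sub_le_Rb_sub_Rb_of_outer hb (by linarith) hxy

lemma strictMonoOn_branchMap (hb : 2 ≤ b) (w : Fin 3) :
    StrictMonoOn (branchMap b w) (branch b w) := fun _ hx _ hy hxy => by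
  linarith [two_mul_sub_le_branchMap_sub hb hx hy hxy.le]

lemma two_mul_dist_le_dist_branchMap (hb : 2 ≤ b) (hx : x ∈ branch b w) (hy : y ∈ branch b w) :
    2 * dist x y ≤ dist (branchMap b w x) (branchMap b w y) := by
  wlog hxy : y ≤ x generalizing x y
  · simpa only [dist_comm] using this hy hx (le_of_not_ge hxy)
  rw [Real.dist_eq, abs_of_nonneg (sub_nonneg.2 hxy)]
  exact (two_mul_sub_le_branchMap_sub hb hy hx hxy).trans (le_abs_self _)

lemma image_branchMap_Icc (hb : 2 ≤ b) (hx : x ∈ branch b w) :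
    branchMap b w '' Icc (branchLeft b w) x = Icc 0 (branchMap b w x) := by
  rw [(continuous_branchMap b w).continuousOn.image_Icc_of_monotoneOn hx.1
    ((strictMonoOn_branchMap hb w).monotoneOn.mono (Icc_subset_Icc_right hx.2)),
    branchMap_branchLeft (by omega)]

lemma image_branchMap_branch (hb : 2 ≤ b) (w : Fin 3) :
    branchMap b w '' branch b w = Icc 0 2 := by
  rw [branch, image_branchMap_Icc hb (right_mem_Icc.2 (branchLeft_le_branchRight b w)),
    branchMap_branchRight (by omega)]

lemma two_sub_mem_Eb_iff : 2 - x ∈ Eb b ↔ x ∈ Eb b := by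
  have hb : (b : ℝ) + 1 ≠ 0 := by positivity
  simp only [Eb, mem_insert_iff, mem_singleton_iff, eq_div_iff hb]
  constructor <;> rintro (h | h) <;> [right; left; right; left] <;> linarith

lemma iterate_Rb_branchMap_mem_iff (hb : b ≠ 0) {S : Set ℝ} (hS : ∀ x, 2 - x ∈ S ↔ x ∈ S)
    (n : ℕ) (w : Fin 3) (x : ℝ) :
    (Rb b)^[n] (branchMap b w x) ∈ S ↔ (Rb b)^[n] (Rb b x) ∈ S := by
  have hcomm : Function.Semiconj (2 - ·) (Rb b) (Rb b) := fun x => (Rb_two_sub hb x).symm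
  match w with
  | 0 | 2 => rfl
  | 1 =>
    have h : 2 - (Rb b)^[n] (Rb b x) = (Rb b)^[n] (2 - Rb b x) := hcomm.iterate_right n (Rb b x)
    exact h ▸ hS _

lemma branchMap_mem_Pm_iff (hb : b ≠ 0) (m : ℕ) (w : Fin 3) (x : ℝ) :
    branchMap b w x ∈ Pm b m ↔ x ∈ Pm b (m + 1) :=
  iterate_Rb_branchMap_mem_iff hb (fun _ => two_sub_mem_Eb_iff) m w x

lemma branchMap_mem_nonescaping_iff (hb : b ≠ 0) (w : Fin 3) (x : ℝ) :
    branchMap b w x ∈ nonescaping (Rb b) (Icc 0 2) ↔ x ∈ nonescaping (Rb b) (Icc 0 2) := by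
  rw [← apply_mem_nonescaping_iff (preimage_Rb_Icc_subset hb) (x := x)]
  exact forall_congr' fun n =>
    iterate_Rb_branchMap_mem_iff hb (fun _ => two_sub_mem_Icc_iff) n w x

lemma branchMap_mem_Icc (hb : 2 ≤ b) (hx : x ∈ branch b w) : branchMap b w x ∈ Icc 0 2 :=
  image_branchMap_branch hb w ▸ mem_image_of_mem _ hx

lemma zero_mem_nonescaping (hb : b ≠ 0) : 0 ∈ nonescaping (Rb b) (Icc 0 2) := fun n => by
  have hfix : Rb b 0 = 0 := branchLeft_zero b ▸ branchMap_branchLeft hb 0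
  rw [Function.iterate_fixed hfix]
  exact left_mem_Icc.2 zero_le_two

lemma two_mem_nonescaping (hb : b ≠ 0) : 2 ∈ nonescaping (Rb b) (Icc 0 2) := fun n => by
  have hfix : Rb b 2 = 2 := branchRight_two b ▸ branchMap_branchRight hb 2
  rw [Function.iterate_fixed hfix]
  exact right_mem_Icc.2 zero_le_two

lemma Pm_subset_nonescaping (hb : b ≠ 0) (m : ℕ) :
    Pm b m ⊆ nonescaping (Rb b) (Icc 0 2) := by
  induction m with
  | zero =>
    change Eb b ⊆ _
    rw [Eb_eq, pair_subset_iff, ← branchMap_mem_nonescaping_iff hb 0,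
      ← branchMap_mem_nonescaping_iff hb 2 (branchLeft b 2), branchMap_branchRight hb,
      branchMap_branchLeft hb]
    exact ⟨two_mem_nonescaping hb, zero_mem_nonescaping hb⟩
  | succ m ih =>
    exact fun x hx => (apply_mem_nonescaping_iff (preimage_Rb_Icc_subset hb)).1 (ih hx)

lemma Pm_subset_Icc (hb : b ≠ 0) (m : ℕ) : Pm b m ⊆ Icc 0 2 := fun _ hx =>
  Pm_subset_nonescaping hb m hx 0

lemma Pm_subset_iUnion_branch (hb : b ≠ 0) (m : ℕ) : Pm b m ⊆ ⋃ w, branch b w := fun _ hx =>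
  mem_iUnion.2 (exists_mem_branch_of_Rb_mem_Icc hb (Pm_subset_nonescaping hb m hx 1))

theorem Jb_eq_nonescaping (hb : 2 ≤ b) : Jb b = nonescaping (Rb b) (Icc 0 2) := by
  have hb₀ : b ≠ 0 := by omega
  refine (closure_minimal (iUnion_subset (Pm_subset_nonescaping hb₀))
    (isClosed_nonescaping (continuous_Rb b) isClosed_Icc)).antisymm ?_
  refine subset_closure_iUnion_of_contracting_lift (r := 1 / 2) (C := 2) (by norm_num)
    (by norm_num) (fun x hx => ?_) (fun n x hx => ?_)
  · have hE : branchRight b 0 ∈ Pm b 0 := .inl rfl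
    have hdist := Real.dist_le_of_mem_Icc (hx 0) (Pm_subset_Icc hb₀ 0 hE)
    exact ⟨_, hE, hdist.trans_eq (sub_zero 2)⟩
  · obtain ⟨w, hw⟩ := exists_mem_branch_of_Rb_mem_Icc hb₀ (hx 1)
    refine ⟨branchMap b w x, (branchMap_mem_nonescaping_iff hb₀ w x).2 hx, fun p hp => ?_⟩
    obtain ⟨q, hq, rfl⟩ := (image_branchMap_branch hb w).ge (Pm_subset_Icc hb₀ n hp)
    refine ⟨q, (branchMap_mem_Pm_iff hb₀ n w q).1 hp, ?_⟩
    linarith [two_mul_dist_le_dist_branchMap hb hw hq]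

lemma branchMap_mem_Jb_iff (hb : 2 ≤ b) (w : Fin 3) (x : ℝ) :
    branchMap b w x ∈ Jb b ↔ x ∈ Jb b := by
  rw [Jb_eq_nonescaping hb, branchMap_mem_nonescaping_iff (by omega)]

lemma branchRight_zero_mem_Jb (b : ℕ) : branchRight b 0 ∈ Jb b :=
  subset_closure (mem_iUnion.2 ⟨0, .inl rfl⟩)

lemma gap_nonempty (hb : 2 ≤ b) (e : Fin 2) : (gap b e).Nonempty :=
  nonempty_Ioo.2 (branchRight_lt_branchLeft hb e.castSucc_lt_succ)

lemma gap_subset_Icc (b : ℕ) (e : Fin 2) : gap b e ⊆ Icc 0 2 := fun _ hx =>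
  ⟨(branch_subset_Icc b _ (right_mem_Icc.2 (branchLeft_le_branchRight b _))).1.trans hx.1.le,
    hx.2.le.trans (branch_subset_Icc b _ (left_mem_Icc.2 (branchLeft_le_branchRight b _))).2⟩

lemma notMem_Jb_of_mem_gap (hb : 2 ≤ b) (hx : x ∈ gap b e) : x ∉ Jb b := by
  rw [Jb_eq_nonescaping hb]
  exact fun h => Rb_notMem_Icc_of_mem_gap (by omega) hx (h 1)

lemma Ioo_diff_Jb_eq (hb : 2 ≤ b) : Ioo 0 2 \ Jb b = Icc 0 2 \ Jb b := by
  rw [← Icc_sdiff_both, sdiff_sdiff, union_eq_self_of_subset_left]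
  rw [Jb_eq_nonescaping hb, pair_subset_iff]
  exact ⟨zero_mem_nonescaping (by omega), two_mem_nonescaping (by omega)⟩

theorem gap_induction (hb : 2 ≤ b) {p : ℝ → Prop} (hgap : ∀ e, ∀ x ∈ gap b e, p x)
    (hbranch : ∀ w, ∀ x ∈ branch b w, x ∉ Jb b → p (branchMap b w x) → p x)
    (hx : x ∈ Icc 0 2 \ Jb b) : p x := by
  obtain ⟨hxI, hxJ⟩ := hx
  obtain ⟨n, hn⟩ : ∃ n, (Rb b)^[n] x ∉ Icc (0 : ℝ) 2 := by
    rw [Jb_eq_nonescaping hb] at hxJ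
    exact not_forall.1 hxJ
  induction n generalizing x with
  | zero => exact absurd hxI hn
  | succ n ih =>
    obtain ⟨w, hw⟩ | ⟨e, he⟩ := exists_mem_branch_or_gap hxI
    · refine hbranch w x hw hxJ (ih (branchMap_mem_Icc hb hw) ?_ ?_)
      · rwa [branchMap_mem_Jb_iff hb]
      · rwa [iterate_Rb_branchMap_mem_iff (by omega) fun _ => two_sub_mem_Icc_iff]
    · exact hgap e x he

lemma encard_Pm_succ_inter (hb : 2 ≤ b) (m : ℕ) (A : Set ℝ) :
    (Pm b (m + 1) ∩ A).encard = ∑ w, (Pm b m ∩ branchMap b w '' (branch b w ∩ A)).encard := by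
  have hb₀ : b ≠ 0 := by omega
  have hsplit : Pm b (m + 1) ∩ A = ⋃ w, Pm b (m + 1) ∩ (branch b w ∩ A) := by
    rw [← inter_iUnion, ← iUnion_inter, ← inter_assoc,
      inter_eq_left.2 (Pm_subset_iUnion_branch hb₀ (m + 1))]
  have hpre (w : Fin 3) : Pm b (m + 1) = branchMap b w ⁻¹' Pm b m :=
    ext fun x => (branchMap_mem_Pm_iff hb₀ m w x).symm
  have hdisj : Pairwise (Function.onFun Disjoint fun w => Pm b (m + 1) ∩ (branch b w ∩ A)) :=
    (pairwise_disjoint_branch hb).mono fun _ _ h =>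
      h.mono (fun _ hx => hx.2.1) (fun _ hx => hx.2.1)
  rw [hsplit, encard_iUnion_of_finite hdisj, finsum_eq_sum_of_fintype]
  refine Finset.sum_congr rfl fun w _ => ?_
  rw [← image_preimage_inter, ← hpre, InjOn.encard_image]
  exact (strictMonoOn_branchMap hb w).injOn.mono fun _ hx => hx.2.1

lemma encard_Pm (hb : 2 ≤ b) (m : ℕ) : (Pm b m).encard = 2 * 3 ^ m := by
  induction m with
  | zero =>
    change (Eb b).encard = _
    rw [Eb_eq, encard_pair (branchRight_lt_branchLeft hb (by decide)).ne, pow_zero, mul_one]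
  | succ m ih =>
    have h := encard_Pm_succ_inter hb m univ
    simp only [inter_univ, image_branchMap_branch hb,
      inter_eq_left.2 (Pm_subset_Icc (by omega : b ≠ 0) m), ih, Finset.sum_const,
      Finset.card_univ, Fintype.card_fin, nsmul_eq_mul] at h
    rw [h]
    push_cast
    ring

/-- The mass that the density of states gives to each point of the `m`-th preimage set. -/
noncomputable def levelWeight (b m : ℕ) : ℝ := ((b : ℝ) - 1) / (2 * ((b : ℝ) + 2) ^ (m + 1))

lemma levelWeight_zero (b : ℕ) : levelWeight b 0 = (b - 1) / (2 * (b + 2)) := by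
  rw [levelWeight, zero_add, pow_one]

lemma levelWeight_succ (b m : ℕ) : levelWeight b (m + 1) = 1 / (b + 2) * levelWeight b m := by
  rw [levelWeight, levelWeight, div_mul_div_comm, one_mul]
  ring

lemma levelWeight_nonneg (hb : 1 ≤ b) (m : ℕ) : 0 ≤ levelWeight b m :=
  div_nonneg (sub_nonneg.2 (mod_cast hb)) (by positivity)

lemma nub_apply (b : ℕ) {A : Set ℝ} (hA : MeasurableSet A) :
    nub b A = ∑' m, ENNReal.ofReal (levelWeight b m) * (Pm b m ∩ A).encard := by
  rw [nub, Measure.sum_apply _ hA]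
  simp only [Measure.smul_apply, smul_eq_mul, sum_dirac_coe_apply _ hA, levelWeight]

lemma hasSum_levelWeight_mul_card (hb : 2 ≤ b) :
    HasSum (fun m => levelWeight b m * (2 * 3 ^ m)) 1 := by
  have hb₂ : (2 : ℝ) ≤ b := mod_cast hb
  have hratio : 3 / ((b : ℝ) + 2) < 1 := (div_lt_one (by positivity)).2 (by linarith)
  have hterm (m : ℕ) : levelWeight b m * (2 * 3 ^ m) =
      (b - 1) / ((b : ℝ) + 2) * (3 / (b + 2)) ^ m := by
    rw [levelWeight, div_pow, pow_succ]
    field_simp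
  have htotal : (b - 1) / ((b : ℝ) + 2) * (1 - 3 / ((b : ℝ) + 2))⁻¹ = 1 := by
    have hne : (b : ℝ) - 1 ≠ 0 := by linarith
    rw [one_sub_div (by positivity), show (b : ℝ) + 2 - 3 = b - 1 by ring]
    exact mul_inv_cancel₀ (div_ne_zero hne (by positivity))
  simpa only [hterm, htotal] using
    (hasSum_geometric_of_lt_one (by positivity) hratio).mul_left ((b - 1) / ((b : ℝ) + 2))

lemma isProbabilityMeasure_nub (hb : 2 ≤ b) : IsProbabilityMeasure (nub b) where
  measure_univ := by
    have hlevel (m : ℕ) : ENNReal.ofReal (levelWeight b m) * (Pm b m ∩ univ).encard =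
        ENNReal.ofReal (levelWeight b m * (2 * 3 ^ m)) := by
      rw [inter_univ, encard_Pm hb, ENNReal.ofReal_mul (levelWeight_nonneg (by omega) m),
        ENNReal.ofReal_mul zero_le_two, ENNReal.ofReal_pow zero_le_three]
      simp
    have hsum := hasSum_levelWeight_mul_card hb
    rw [nub_apply b .univ, tsum_congr hlevel, ← ENNReal.ofReal_tsum_of_nonneg _ hsum.summable,
      hsum.tsum_eq, ENNReal.ofReal_one]
    exact fun m => mul_nonneg (levelWeight_nonneg (by omega) m) (by positivity)

lemma ae_mem_Icc_nub (hb : b ≠ 0) : ∀ᵐ x ∂nub b, x ∈ Icc 0 2 := by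
  change nub b (Icc 0 2)ᶜ = 0
  rw [nub_apply b measurableSet_Icc.compl, ENNReal.tsum_eq_zero]
  intro m
  rw [(disjoint_compl_right_iff_subset.2 (Pm_subset_Icc hb m)).inter_eq, encard_empty,
    ENat.toENNReal_zero, mul_zero]

lemma measureReal_nub_Icc_zero (hb : b ≠ 0) (y : ℝ) : (nub b).real (Icc 0 y) = Nb b y := by
  refine measureReal_congr ?_
  filter_upwards [ae_mem_Icc_nub hb] with x hx
  exact propext (and_iff_right hx.1)

lemma Nb_two (hb : 2 ≤ b) : Nb b 2 = 1 := by
  have := isProbabilityMeasure_nub hb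
  rw [← measureReal_nub_Icc_zero (by omega), Measure.real,
    (mem_ae_iff_prob_eq_one measurableSet_Icc).1 (ae_mem_Icc_nub (by omega)), ENNReal.toReal_one]

theorem nub_apply_eq_sum_image (hb : 2 ≤ b) {A : Set ℝ} (hA : MeasurableSet A) :
    nub b A = ENNReal.ofReal (levelWeight b 0) * (Eb b ∩ A).encard +
      ENNReal.ofReal (1 / (b + 2)) * ∑ w, nub b (branchMap b w '' (branch b w ∩ A)) := by
  have himage (w : Fin 3) : MeasurableSet (branchMap b w '' (branch b w ∩ A)) :=
    (measurableSet_Icc.inter hA).image_of_continuousOn_injOn (continuous_branchMap b w).continuousOn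
      ((strictMonoOn_branchMap hb w).injOn.mono inter_subset_left)
  have hlevel (m : ℕ) :
      ENNReal.ofReal (levelWeight b (m + 1)) * (Pm b (m + 1) ∩ A).encard =
        ENNReal.ofReal (1 / (b + 2)) * ∑ w, ENNReal.ofReal (levelWeight b m) *
          (Pm b m ∩ branchMap b w '' (branch b w ∩ A)).encard := by
    rw [encard_Pm_succ_inter hb, levelWeight_succ, ENNReal.ofReal_mul (by positivity), mul_assoc,
      ← Finset.mul_sum]
    congr 2
    exact map_sum ENat.toENNRealRingHom _ _
  rw [nub_apply b hA, tsum_eq_zero_add' ENNReal.summable, tsum_congr hlevel, ENNReal.tsum_mul_left,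
    Summable.tsum_finsetSum fun _ _ => ENNReal.summable]
  simp only [nub_apply b (himage _)]
  rfl

lemma Nb_eq_sum_image (hb : 2 ≤ b) (x : ℝ) :
    Nb b x = ((b : ℝ) - 1) / (2 * (b + 2)) * (Eb b ∩ Iic x).ncard +
      (∑ w, (nub b).real (branchMap b w '' (branch b w ∩ Iic x))) / (b + 2) := by
  have := isProbabilityMeasure_nub hb
  have hfin : (Eb b ∩ Iic x).Finite := ((finite_singleton _).insert _).inter_of_left _
  have hsum : ∑ w, nub b (branchMap b w '' (branch b w ∩ Iic x)) ≠ ⊤ :=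
    ENNReal.sum_ne_top.2 fun _ _ => measure_ne_top _ _
  rw [Nb, nub_apply_eq_sum_image hb measurableSet_Iic, ← hfin.cast_ncard_eq, ENat.toENNReal_coe,
    ENNReal.toReal_add (by finiteness) (by finiteness), ENNReal.toReal_mul, ENNReal.toReal_mul,
    ENNReal.toReal_ofReal (levelWeight_nonneg (by omega) 0), levelWeight_zero,
    ENNReal.toReal_ofReal (by positivity), ENNReal.toReal_sum fun _ _ => measure_ne_top _ _,
    one_div_mul_eq_div]
  rfl

lemma ncard_Eb_inter_Iic_of_lt (hb : 2 ≤ b) (hx : x < branchRight b 0) :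
    (Eb b ∩ Iic x).ncard = 0 := by
  have hlt : branchRight b 0 < branchLeft b 2 := branchRight_lt_branchLeft hb (by decide)
  rw [Eb_eq, ncard_eq_zero, insert_inter_of_notMem (notMem_Iic.2 hx),
    singleton_inter_eq_empty.2 (notMem_Iic.2 (hx.trans hlt))]

lemma ncard_Eb_inter_Iic_of_mem_Ico (hx : x ∈ Ico (branchRight b 0) (branchLeft b 2)) :
    (Eb b ∩ Iic x).ncard = 1 := by
  rw [Eb_eq, insert_inter_of_mem (mem_Iic.2 hx.1),
    singleton_inter_eq_empty.2 (notMem_Iic.2 hx.2), insert_empty_eq, ncard_singleton]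

lemma ncard_Eb_inter_Iic_of_le (hb : 2 ≤ b) (hx : branchLeft b 2 ≤ x) :
    (Eb b ∩ Iic x).ncard = 2 := by
  have hlt : branchRight b 0 < branchLeft b 2 := branchRight_lt_branchLeft hb (by decide)
  rw [Eb_eq, inter_eq_left.2 (pair_subset (mem_Iic.2 (hlt.le.trans hx)) hx), ncard_pair hlt.ne]

lemma measureReal_image_branchMap_of_le (hb : 2 ≤ b) (hx : branchRight b w ≤ x) :
    (nub b).real (branchMap b w '' (branch b w ∩ Iic x)) = 1 := by
  rw [inter_eq_left.2 fun _ hy => hy.2.trans hx, image_branchMap_branch hb,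
    measureReal_nub_Icc_zero (by omega), Nb_two hb]

lemma measureReal_image_branchMap_of_lt (hx : x < branchLeft b w) :
    (nub b).real (branchMap b w '' (branch b w ∩ Iic x)) = 0 := by
  have hempty : branch b w ∩ Iic x = ∅ :=
    disjoint_iff_inter_eq_empty.1 (disjoint_left.2 fun _ hy hyx => (hyx.trans_lt hx).not_ge hy.1)
  rw [hempty, image_empty, measureReal_empty]

lemma measureReal_image_branchMap_of_mem (hb : 2 ≤ b) (hx : x ∈ branch b w) :
    (nub b).real (branchMap b w '' (branch b w ∩ Iic x)) = Nb b (branchMap b w x) := by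
  have hinter : branch b w ∩ Iic x = Icc (branchLeft b w) x := by
    rw [branch, ← Ici_inter_Iic, inter_assoc, Iic_inter_Iic, inf_eq_right.2 hx.2, Ici_inter_Iic]
  rw [hinter, image_branchMap_Icc hb hx, measureReal_nub_Icc_zero (by omega)]

theorem Nb_of_mem_gap (hb : 2 ≤ b) (hx : x ∈ gap b e) :
    Nb b x = (b + 1 + 2 * e) / (2 * (b + 2)) := by
  have hfull {v : Fin 3} (hv : v ≤ e.castSucc) := measureReal_image_branchMap_of_le hb
    (((strictMono_branchRight hb).monotone hv).trans hx.1.le)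
  have hempty {v : Fin 3} (hv : e.succ ≤ v) := measureReal_image_branchMap_of_lt
    (hx.2.trans_le ((strictMono_branchLeft hb).monotone hv))
  have hcard : (Eb b ∩ Iic x).ncard = 1 := ncard_Eb_inter_Iic_of_mem_Ico
    ⟨((strictMono_branchRight hb).monotone (Fin.zero_le _)).trans hx.1.le,
      hx.2.trans_le ((strictMono_branchLeft hb).monotone (Fin.le_last _))⟩
  have hsum : ∑ v, (nub b).real (branchMap b v '' (branch b v ∩ Iic x)) = e + 1 := by
    rw [Fin.sum_univ_three]
    match e with
    | 0 =>
      rw [hfull (v := 0) (by decide), hempty (v := 1) (by decide), hempty (v := 2) (by decide)]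
      norm_num
    | 1 =>
      rw [hfull (v := 0) (by decide), hfull (v := 1) (by decide), hempty (v := 2) (by decide)]
      norm_num
  rw [Nb_eq_sum_image hb, hcard, hsum]
  field_simp
  push_cast
  ring

theorem Nb_of_mem_branch (hb : 2 ≤ b) (hx : x ∈ branch b w) (hx₀ : x ≠ branchRight b 0) :
    Nb b x = ((b + 1) / 2 * w + Nb b (branchMap b w x)) / (b + 2) := by
  have hfull {v : Fin 3} (hv : v < w) := measureReal_image_branchMap_of_le hb
    ((branchRight_lt_branchLeft hb hv).le.trans hx.1)
  have hempty {v : Fin 3} (hv : w < v) := measureReal_image_branchMap_of_lt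
    (hx.2.trans_lt (branchRight_lt_branchLeft hb hv))
  have hself := measureReal_image_branchMap_of_mem hb hx
  obtain ⟨hcard, hsum⟩ : (Eb b ∩ Iic x).ncard = (w : ℕ) ∧
      ∑ v, (nub b).real (branchMap b v '' (branch b v ∩ Iic x)) = w + Nb b (branchMap b w x) := by
    rw [Fin.sum_univ_three]
    match w with
    | 0 =>
      rw [hself, hempty (v := 1) (by decide), hempty (v := 2) (by decide)]
      exact ⟨ncard_Eb_inter_Iic_of_lt hb (hx.2.lt_of_ne hx₀), by simp⟩
    | 1 =>
      rw [hfull (v := 0) (by decide), hself, hempty (v := 2) (by decide)]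
      exact ⟨ncard_Eb_inter_Iic_of_mem_Ico
        ⟨(branchRight_lt_branchLeft hb (by decide)).le.trans hx.1,
          hx.2.trans_lt (branchRight_lt_branchLeft hb (by decide))⟩, by simp⟩
    | 2 =>
      rw [hfull (v := 0) (by decide), hfull (v := 1) (by decide), hself]
      exact ⟨ncard_Eb_inter_Iic_of_le hb hx.1, by norm_num⟩
  rw [Nb_eq_sum_image hb, hcard, hsum]
  field_simp
  ring

end Decimation

section Labels

variable {b : ℕ} {g : ℝ}

/-- The gap label of the word `w 0, …, w k`, with the digits indexed from `0` instead of `1`. -/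
noncomputable def gapLabel (b k : ℕ) (w : ℕ → ℕ) : ℝ :=
  (b + 1 + 2 * w k) / (2 * ((b : ℝ) + 2) ^ (k + 1)) +
    ((b : ℝ) + 1) / 2 * ∑ j ∈ Finset.range k, w j / ((b : ℝ) + 2) ^ (j + 1)

lemma gapLabel_zero (b : ℕ) (w : ℕ → ℕ) :
    gapLabel b 0 w = (b + 1 + 2 * w 0) / (2 * (b + 2)) := by
  simp [gapLabel]

lemma gapLabel_succ (b k : ℕ) (w : ℕ → ℕ) :
    gapLabel b (k + 1) w = ((b + 1) / 2 * w 0 + gapLabel b k fun j => w (j + 1)) / (b + 2) := by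
  have htail : ∑ j ∈ Finset.range k, (w (j + 1) : ℝ) / ((b : ℝ) + 2) ^ (j + 1 + 1) =
      (∑ j ∈ Finset.range k, (w (j + 1) : ℝ) / ((b : ℝ) + 2) ^ (j + 1)) / (b + 2) := by
    simp only [Finset.sum_div, div_div, pow_succ]
  rw [gapLabel, gapLabel, Finset.sum_range_succ', htail]
  field_simp
  ring

lemma mem_Gb_iff :
    g ∈ Gb b ↔ ∃ k w, (∀ j < k, w j < 3) ∧ w k < 2 ∧ gapLabel b k w = g := by
  have hthree (n : ℕ) : n ∈ ({0, 1, 2} : Set ℕ) ↔ n < 3 := by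
    simp only [mem_insert_iff, mem_singleton_iff]; omega
  have htwo (n : ℕ) : n ∈ ({0, 1} : Set ℕ) ↔ n < 2 := by
    simp only [mem_insert_iff, mem_singleton_iff]; omega
  have hshift (k : ℕ) (f : ℕ → ℝ) :
      ∑ j ∈ Finset.Icc 1 k, f j = ∑ j ∈ Finset.range k, f (j + 1) := by
    rw [Finset.range_eq_Ico, Finset.sum_Ico_add' f, zero_add, Finset.Ico_add_one_right_eq_Icc]
  simp only [Gb, hthree, htwo, hshift, mem_ofPred_eq]
  constructor
  · rintro ⟨k, w, hk, hw, hlast, rfl⟩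
    obtain ⟨k, rfl⟩ := Nat.exists_eq_add_of_le' hk
    exact ⟨k, fun j => w (j + 1), fun j hj => hw (j + 1) (by omega) hj, hlast, rfl⟩
  · rintro ⟨k, w, hw, hlast, rfl⟩
    exact ⟨k + 1, fun j => w (j - 1), by omega, fun j _ _ => hw (j - 1) (by omega), hlast, rfl⟩

lemma base_mem_Gb (b : ℕ) (e : Fin 2) : ((b : ℝ) + 1 + 2 * e) / (2 * (b + 2)) ∈ Gb b :=
  mem_Gb_iff.2 ⟨0, fun _ => e, by simp, e.isLt, gapLabel_zero b _⟩

lemma step_mem_Gb (w : Fin 3) (hg : g ∈ Gb b) : ((b + 1) / 2 * w + g) / (b + 2) ∈ Gb b := by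
  obtain ⟨k, v, hv, hlast, rfl⟩ := mem_Gb_iff.1 hg
  refine mem_Gb_iff.2 ⟨k + 1, fun j => j.casesOn w v, fun j hj => ?_, hlast, gapLabel_succ b k _⟩
  cases j with
  | zero => exact w.isLt
  | succ j => exact hv j (Nat.lt_of_succ_lt_succ hj)

theorem Gb_induction {p : ℝ → Prop} (base : ∀ e : Fin 2, p ((b + 1 + 2 * e) / (2 * (b + 2))))
    (step : ∀ (w : Fin 3) (g : ℝ), p g → p (((b + 1) / 2 * w + g) / (b + 2)))
    (hg : g ∈ Gb b) : p g := by
  rw [mem_Gb_iff] at hg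
  obtain ⟨k, w, hw, hlast, rfl⟩ := hg
  induction k generalizing w with
  | zero => exact gapLabel_zero b w ▸ base ⟨w 0, hlast⟩
  | succ k ih =>
    rw [gapLabel_succ]
    exact step ⟨w 0, hw 0 k.succ_pos⟩ _ (ih _ (fun j hj => hw (j + 1) (Nat.succ_lt_succ hj)) hlast)

end Labels

end BubbleDiamond

/-- The set of values taken by the integrated density of states on the gaps of the
spectrum equals the gap label set: `{N_b(x) : x ∈ (0,2) \ J_b} = G_b`. -/
theorem gap_labeling (b : ℕ) (hb : 2 ≤ b) :
    Nb b '' (Ioo (0 : ℝ) 2 \ Jb b) = Gb b := by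
  have hNb_branch {w x} (hx : x ∈ BubbleDiamond.branch b w) (hxJ : x ∉ Jb b) :=
    BubbleDiamond.Nb_of_mem_branch hb hx
      (ne_of_mem_of_not_mem (BubbleDiamond.branchRight_zero_mem_Jb b) hxJ).symm
  rw [BubbleDiamond.Ioo_diff_Jb_eq hb]
  refine Subset.antisymm (image_subset_iff.2 fun x hx => ?_) fun g hg => ?_
  · refine BubbleDiamond.gap_induction (p := fun x => Nb b x ∈ Gb b) hb (fun e x hx => ?_)
      (fun w x hx hxJ hN => ?_) hx
    · exact BubbleDiamond.Nb_of_mem_gap hb hx ▸ BubbleDiamond.base_mem_Gb b e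
    · exact hNb_branch hx hxJ ▸ BubbleDiamond.step_mem_Gb w hN
  · refine BubbleDiamond.Gb_induction (fun e => ?_) (fun w g => ?_) hg
    · obtain ⟨x, hx⟩ := BubbleDiamond.gap_nonempty hb e
      exact ⟨x, ⟨BubbleDiamond.gap_subset_Icc b e hx, BubbleDiamond.notMem_Jb_of_mem_gap hb hx⟩,
        BubbleDiamond.Nb_of_mem_gap hb hx⟩
    · rintro ⟨y, ⟨hyI, hyJ⟩, rfl⟩
      obtain ⟨x, hx, rfl⟩ := (BubbleDiamond.image_branchMap_branch hb w).ge hyI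
      rw [BubbleDiamond.branchMap_mem_Jb_iff hb] at hyJ
      exact ⟨x, ⟨BubbleDiamond.branch_subset_Icc b w hx, hyJ⟩, hNb_branch hx hyJ⟩
end
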